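/- arXiv:2001.04676 — 4 statements merged into one kernel-verified Lean document; each statement's English description precedes it below -/
import Mathlib

section
/- Suppose there exist real numbers s, t > 2 with (s−2)(t−2) ≥ 4 such that E[w(X, Z_1)^s] < ∞ and E[|log w(X, Z_1)|^t] < ∞. Then there exists a constant c > 0 such that for every ℓ ≥ 1 the coupled level-ℓ correction satisfies Var[Δ_ℓ] ≤ c·2^{−βℓ}, where β = min(s(t−2)/(2t), 2). -/
open MeasureTheory ProbabilityTheory Finset
open scoped ENNReal

noncomputable section

/-- Expectation of a functional `f` of a data point `x ~ ν` together with `n` samples drawn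
i.i.d. (conditionally on `x`) from the proposal kernel `q`. -/
def jointExp {𝒳 𝒵 : Type*} [MeasurableSpace 𝒳] [MeasurableSpace 𝒵]
    (ν : Measure 𝒳) (q : Kernel 𝒳 𝒵) (n : ℕ) (f : 𝒳 → (Fin n → 𝒵) → ℝ) : ℝ :=
  ∫ x, ∫ zs, f x zs ∂(Measure.pi fun _ : Fin n => q x) ∂ν

/-- The coupled level correction `Δ = log Ȳ_{2n} − ½(log Ȳₙ⁽ᵃ⁾ + log Ȳₙ⁽ᵇ⁾)`, where the
averages `Ȳ` of the importance weights `w` are taken over all `2n` samples, the first `n`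
samples, and the last `n` samples respectively. -/
def mlmcCorrection {𝒳 𝒵 : Type*} (w : 𝒳 → 𝒵 → ℝ) (n : ℕ) (x : 𝒳)
    (zs : Fin (2 * n) → 𝒵) : ℝ :=
  Real.log ((∑ k, w x (zs k)) / (2 * n))
    - (Real.log ((∑ k : Fin n, w x (zs ⟨k.1, by have := k.2; omega⟩)) / n)
        + Real.log ((∑ k : Fin n, w x (zs ⟨n + k.1, by have := k.2; omega⟩)) / n)) / 2

/-- The variance of the coupled level correction (half-size `n`, i.e. `2n` samples). -/
def mlmcCorrectionVar {𝒳 𝒵 : Type*} [MeasurableSpace 𝒳] [MeasurableSpace 𝒵]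
    (ν : Measure 𝒳) (q : Kernel 𝒳 𝒵) (w : 𝒳 → 𝒵 → ℝ) (n : ℕ) : ℝ :=
  jointExp ν q (2 * n) (fun x zs =>
    (mlmcCorrection w n x zs - jointExp ν q (2 * n) (mlmcCorrection w n)) ^ 2)

lemma tay1 (p : ℝ) (hp : 2 < p) (u : ℝ) :
    |1 + u| ^ p ≤ 1 + p * u + (p ^ 2 + (p + 1) ^ p + p ^ p) * (u ^ 2 + |u| ^ p) := by
  have h0 : 0 ≤ |u| ^ p := by positivity
  have h1 : 0 ≤ (p + 1) ^ p := by positivity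
  have h2 : 0 ≤ p ^ p := by positivity
  have hp0 : 0 < p := by linarith
  by_cases h : |p * u| ≤ 1
  · have he := abs_le.1 (Real.abs_exp_sub_one_sub_id_le h)
    have hu : 0 ≤ 1 + u := by
      have := (abs_le.1 h).1
      nlinarith
    have : |1 + u| ^ p ≤ Real.exp (p * u) := by
      rw [abs_of_nonneg hu, mul_comm, Real.exp_mul]
      exact Real.rpow_le_rpow hu (by linarith [Real.add_one_le_exp u]) hp0.le
    have h3 : 0 ≤ (p ^ 2) * |u| ^ p + ((p + 1) ^ p + p ^ p) * (u ^ 2 + |u| ^ p) := by positivity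
    nlinarith
  · push Not at h
    rw [abs_mul, abs_of_pos hp0] at h
    have h3 : |1 + u| ^ p ≤ (p + 1) ^ p * |u| ^ p := by
      rw [← Real.mul_rpow (by positivity) (by positivity)]
      apply Real.rpow_le_rpow (by positivity) _ hp0.le
      have := abs_add_le 1 u
      rw [abs_one] at this
      nlinarith
    have h4 : p * |u| ≤ p ^ p * |u| ^ p := by
      rw [← Real.mul_rpow (by positivity) (by positivity)]
      exact Real.self_le_rpow_of_one_le h.le (by linarith)
    have h5 : -(p * u) ≤ p * |u| := by nlinarith [neg_abs_le u]
    have h6 : 0 ≤ (p ^ 2) * |u| ^ p + (p ^ 2 + (p + 1) ^ p + p ^ p) * u ^ 2 := by positivity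
    nlinarith

lemma tay2 (p : ℝ) (hp : 2 < p) (a b : ℝ) :
    |a + b| ^ p ≤ |a| ^ p + p * ((a * |a| ^ (p - 2)) * b) +
      (p ^ 2 + (p + 1) ^ p + p ^ p) * (|a| ^ (p - 2) * b ^ 2 + |b| ^ p) := by
  by_cases ha : a = 0
  · subst ha
    simp only [zero_add, abs_zero, zero_mul, mul_zero]
    rw [Real.zero_rpow (by linarith), Real.zero_rpow (by linarith)]
    have h1 : 1 ≤ (p + 1) ^ p := Real.one_le_rpow (by linarith) (by linarith)
    have h2 : 0 ≤ p ^ p := by positivity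
    have h0 : 0 ≤ |b| ^ p := by positivity
    nlinarith [mul_nonneg (add_nonneg (sq_nonneg p) h2) h0, mul_nonneg (sub_nonneg.2 h1) h0]
  · have hpa : 0 < |a| := abs_pos.2 ha
    have key := mul_le_mul_of_nonneg_left (tay1 p hp (b / a)) (Real.rpow_nonneg (abs_nonneg a) p)
    rw [← Real.mul_rpow (by positivity) (by positivity), ← abs_mul] at key
    have e1 : a * (1 + b / a) = a + b := by field_simp
    have e2 : |a| ^ p = |a| ^ (p - 2) * a ^ 2 := by
      rw [← sq_abs a, ← Real.rpow_natCast, ← Real.rpow_add hpa]; norm_num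
    have e3 : |a| ^ p * |b / a| ^ p = |b| ^ p := by
      rw [← Real.mul_rpow (by positivity) (by positivity), ← abs_mul]
      congr 2; field_simp
    rw [e1] at key
    refine key.trans (le_of_eq ?_)
    have : |a| ^ p * (1 + p * (b / a) + (p ^ 2 + (p + 1) ^ p + p ^ p) * ((b / a) ^ 2 + |b / a| ^ p))
      = |a| ^ p + p * (|a| ^ p * (b / a)) + (p ^ 2 + (p + 1) ^ p + p ^ p) * (|a| ^ p * (b / a) ^ 2 + |a| ^ p * |b / a| ^ p) := by ring
    rw [this, e3, e2]
    have f1 : |a| ^ (p - 2) * a ^ 2 * (b / a) = a * |a| ^ (p - 2) * b := by field_simp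
    have f2 : |a| ^ (p - 2) * a ^ 2 * (b / a) ^ 2 = |a| ^ (p - 2) * b ^ 2 := by field_simp
    rw [f1, f2]

lemma tay3 (p : ℝ) (hp : 2 < p) (δ : ℝ) (hδ : 0 < δ) (K : ℝ) (hK : 1 ≤ K) (a b : ℝ) :
    |a| ^ (p - 2) * b ^ 2 ≤ δ ^ 2 / K * |a| ^ p + δ ^ (2 - p) * (K ^ (p / 2 - 1) * |b| ^ p) := by
  have hK0 : 0 < K := by linarith
  have e (a : ℝ) : |a| ^ p = |a| ^ (p - 2) * a ^ 2 := by
    rcases eq_or_ne a 0 with rfl | ha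
    · simp; rw [Real.zero_rpow (by linarith)]
    rw [← sq_abs a, ← Real.rpow_natCast, ← Real.rpow_add (abs_pos.2 ha)]; norm_num
  have hsK : 0 < √K := Real.sqrt_pos.2 hK0
  by_cases h : √K * |b| ≤ δ * |a|
  · have h2 : K * b ^ 2 ≤ δ ^ 2 * a ^ 2 := by
      have := pow_le_pow_left₀ (by positivity) h 2
      rwa [mul_pow, mul_pow, Real.sq_sqrt hK0.le, sq_abs, sq_abs] at this
    have h3 : b ^ 2 ≤ δ ^ 2 / K * a ^ 2 := by
      rw [div_mul_eq_mul_div, le_div_iff₀ hK0]; linarith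
    have h4 : 0 ≤ δ ^ (2 - p) * (K ^ (p / 2 - 1) * |b| ^ p) := by positivity
    have h5 := mul_le_mul_of_nonneg_left h3 (Real.rpow_nonneg (abs_nonneg a) (p - 2))
    rw [e a]
    linarith
  · push Not at h
    have h1 : |a| ≤ √K / δ * |b| := by
      rw [div_mul_eq_mul_div, le_div_iff₀ hδ]; linarith
    have h2 : |a| ^ (p - 2) ≤ (√K / δ * |b|) ^ (p - 2) :=
      Real.rpow_le_rpow (by positivity) h1 (by linarith)
    have h3 : (√K / δ * |b|) ^ (p - 2) = δ ^ (2 - p) * K ^ (p / 2 - 1) * |b| ^ (p - 2) := by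
      rw [Real.mul_rpow (by positivity) (by positivity), Real.div_rpow (by positivity) hδ.le,
        Real.sqrt_eq_rpow, ← Real.rpow_mul hK0.le, show 2 - p = -(p - 2) by ring,
        Real.rpow_neg hδ.le, show 1 / 2 * (p - 2) = p / 2 - 1 by ring]
      field_simp
    rw [e b]
    rw [h3] at h2
    have h4 : 0 ≤ δ ^ 2 / K * |a| ^ p := by positivity
    have h5 := mul_le_mul_of_nonneg_right h2 (sq_nonneg b)
    linarith

lemma tay4 (p : ℝ) (hp : 2 < p) : ∃ L : ℝ, 1 ≤ L ∧ ∀ K : ℝ, 1 ≤ K → ∀ a b : ℝ,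
    |a + b| ^ p ≤ |a| ^ p + 1 / (2 * K) * |a| ^ p + p * ((a * |a| ^ (p - 2)) * b)
      + L * K ^ (p / 2 - 1) * |b| ^ p := by
  set C := p ^ 2 + (p + 1) ^ p + p ^ p with hC
  have hC1 : 1 ≤ C := by
    have h1 : 1 ≤ (p + 1) ^ p := Real.one_le_rpow (by linarith) (by linarith)
    have h2 : 0 ≤ p ^ p := by positivity
    nlinarith
  set δ := √(1 / (2 * C)) with hδ
  have hd0 : 0 < δ := Real.sqrt_pos.2 (by positivity)
  have hd : C * δ ^ 2 = 1 / 2 := by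
    rw [hδ, Real.sq_sqrt (by positivity)]; field_simp
  have hdp : 0 < δ ^ (2 - p) := by positivity
  refine ⟨C * δ ^ (2 - p) + C, by nlinarith, fun K hK a b => ?_⟩
  have h1 := tay2 p hp a b
  have h2 := mul_le_mul_of_nonneg_left (tay3 p hp δ hd0 K hK a b) (by linarith : 0 ≤ C)
  have h3 : |b| ^ p ≤ K ^ (p / 2 - 1) * |b| ^ p := by
    have : 1 ≤ K ^ (p / 2 - 1) := Real.one_le_rpow hK (by linarith)
    have h0 : 0 ≤ |b| ^ p := by positivity
    nlinarith
  have h3 := mul_le_mul_of_nonneg_left h3 (by linarith : 0 ≤ C)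
  have h4 : C * (δ ^ 2 / K * |a| ^ p) = 1 / (2 * K) * |a| ^ p := by
    rw [← mul_assoc, ← mul_div_assoc, hd]; field_simp
  rw [← hC] at h1
  nlinarith

lemma mz_core {ι Ω : Type*} [MeasurableSpace Ω] (p L : ℝ) (hp : 2 < p) (hL1 : 1 ≤ L)
    (hL : ∀ K : ℝ, 1 ≤ K → ∀ a b : ℝ,
      |a + b| ^ p ≤ |a| ^ p + 1 / (2 * K) * |a| ^ p + p * ((a * |a| ^ (p - 2)) * b)
      + L * K ^ (p / 2 - 1) * |b| ^ p)
    (μ : Measure Ω) [IsProbabilityMeasure μ] (ξ : ι → Ω → ℝ)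
    (hind : iIndepFun ξ μ) (hmeas : ∀ i, Measurable (ξ i))
    (hint : ∀ i, Integrable (fun ω => |ξ i ω| ^ p) μ) (hmean : ∀ i, ∫ ω, ξ i ω ∂μ = 0)
    (m : ℝ) (hm : ∀ i, ∫ ω, |ξ i ω| ^ p ∂μ ≤ m) (S : Finset ι) :
    Integrable (fun ω => |∑ i ∈ S, ξ i ω| ^ p) μ ∧
    ∫ ω, |∑ i ∈ S, ξ i ω| ^ p ∂μ ≤ 2 * L * (S.card : ℝ) ^ (p / 2) * m := by
  classical
  have hp0 : 0 < p := by linarith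
  have hpE : ENNReal.ofReal p ≠ 0 := by simpa using hp0
  have hiff : ∀ f : Ω → ℝ, Measurable f →
      (Integrable (fun ω => |f ω| ^ p) μ ↔ MemLp f (ENNReal.ofReal p) μ) := by
    intro f hf
    rw [← integrable_norm_rpow_iff hf.aestronglyMeasurable hpE ENNReal.ofReal_ne_top,
      ENNReal.toReal_ofReal hp0.le]
    rfl
  have hLp : ∀ i, MemLp (ξ i) (ENNReal.ofReal p) μ := fun i => (hiff _ (hmeas i)).1 (hint i)
  have hSm : ∀ S : Finset ι, Measurable (fun ω => ∑ i ∈ S, ξ i ω) := fun S =>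
    Finset.measurable_fun_sum S (fun i _ => hmeas i)
  have hSint : ∀ S : Finset ι, Integrable (fun ω => |∑ i ∈ S, ξ i ω| ^ p) μ := fun S =>
    (hiff _ (hSm S)).2 (memLp_finsetSum S (fun i _ => hLp i))
  refine ⟨hSint S, ?_⟩
  induction S using Finset.induction_on with
  | empty => simp [Real.zero_rpow hp0.ne', Real.zero_rpow (by linarith : p / 2 ≠ 0)]
  | insert i S hi ih =>
    have hm0 : 0 ≤ m := le_trans (integral_nonneg (fun ω => by positivity)) (hm i)
    rcases S.eq_empty_or_nonempty with rfl | hne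
    · simp only [insert_empty_eq, sum_singleton, card_singleton, Nat.cast_one, Real.one_rpow,
        mul_one]
      nlinarith [hm i]
    have hk : (1 : ℝ) ≤ (S.card : ℝ) := by exact_mod_cast hne.card_pos
    set k : ℝ := (S.card : ℝ) with hkdef
    have hpw : ∀ ω, |∑ j ∈ insert i S, ξ j ω| ^ p ≤
        |∑ j ∈ S, ξ j ω| ^ p + 1 / (2 * k) * |∑ j ∈ S, ξ j ω| ^ p
          + p * (((∑ j ∈ S, ξ j ω) * |∑ j ∈ S, ξ j ω| ^ (p - 2)) * ξ i ω)
          + L * k ^ (p / 2 - 1) * |ξ i ω| ^ p := by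
      intro ω
      rw [Finset.sum_insert hi, add_comm]
      exact hL k hk _ _
    have hindep : IndepFun (fun ω => ∑ j ∈ S, ξ j ω) (ξ i) μ := by
      have := hind.indepFun_finsetSum_of_notMem hmeas hi
      convert this using 1
      ext ω; simp
    have hgm : Measurable (fun y : ℝ => y * |y| ^ (p - 2)) := by fun_prop
    have hindep2 : IndepFun (fun ω => (∑ j ∈ S, ξ j ω) * |∑ j ∈ S, ξ j ω| ^ (p - 2)) (ξ i) μ :=
      hindep.comp hgm measurable_id
    have hgint : Integrable (fun ω => (∑ j ∈ S, ξ j ω) * |∑ j ∈ S, ξ j ω| ^ (p - 2)) μ := by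
      refine Integrable.mono' ((integrable_const (1 : ℝ)).add (hSint S))
        (hgm.comp (hSm S)).aestronglyMeasurable (Filter.Eventually.of_forall fun ω => ?_)
      set y := ∑ j ∈ S, ξ j ω
      simp only [Pi.add_apply, Real.norm_eq_abs]
      rw [abs_mul, abs_of_nonneg (Real.rpow_nonneg (abs_nonneg y) _)]
      have h0 : 0 ≤ |y| ^ p := by positivity
      rcases le_total |y| 1 with h | h
      · have : |y| ^ (p - 2) ≤ 1 := Real.rpow_le_one (abs_nonneg _) h (by linarith)
        have h2 : 0 ≤ |y| ^ (p - 2) := by positivity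
        nlinarith [abs_nonneg y]
      · have : |y| * |y| ^ (p - 2) = |y| ^ (p - 1) := by
          rw [← Real.rpow_one_add' (abs_nonneg _) (by linarith)]; congr 1; ring
        rw [this]
        have := Real.rpow_le_rpow_of_exponent_le h (by linarith : p - 1 ≤ p)
        linarith
    have hxi : Integrable (ξ i) μ := (hLp i).integrable (by
      rw [ENNReal.one_le_ofReal]; linarith)
    have hprod : ∫ ω, ((∑ j ∈ S, ξ j ω) * |∑ j ∈ S, ξ j ω| ^ (p - 2)) * ξ i ω ∂μ = 0 := by
      rw [hindep2.integral_fun_mul_eq_mul_integral hgint.aestronglyMeasurable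
        hxi.aestronglyMeasurable, hmean i, mul_zero]
    have hprodi : Integrable
        (fun ω => ((∑ j ∈ S, ξ j ω) * |∑ j ∈ S, ξ j ω| ^ (p - 2)) * ξ i ω) μ :=
      hindep2.integrable_mul hgint hxi
    have I1 := hSint S
    have I2 := I1.const_mul (1 / (2 * k))
    have I3 := hprodi.const_mul p
    have I4 := (hint i).const_mul (L * k ^ (p / 2 - 1))
    have h1 := integral_mono (hSint (insert i S)) (((I1.add I2).add I3).add I4) hpw
    rw [integral_add' ((I1.add I2).add I3) I4, integral_add' (I1.add I2) I3, integral_add' I1 I2,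
      integral_const_mul, integral_const_mul, integral_const_mul, hprod] at h1
    refine h1.trans ?_
    rw [Finset.card_insert_of_notMem hi]
    push_cast
    rw [← hkdef]
    have hb : k ^ (p / 2) + k ^ (p / 2 - 1) ≤ (k + 1) ^ (p / 2) := by
      have := one_add_mul_self_le_rpow_one_add (s := 1 / k) (p := p / 2)
        (by have : 0 ≤ 1 / k := by positivity
            linarith) (by linarith)
      have h2 := mul_le_mul_of_nonneg_left this (Real.rpow_nonneg (by linarith : 0 ≤ k) (p / 2))
      rw [← Real.mul_rpow (by linarith) (by positivity)] at h2
      have e : k * (1 + 1 / k) = k + 1 := by field_simp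
      rw [e] at h2
      refine le_trans ?_ h2
      have e2 : k ^ (p / 2 - 1) = k ^ (p / 2) * (1 / k) := by
        rw [Real.rpow_sub_one (by linarith)]; ring
      have h3 : 0 ≤ k ^ (p / 2) * (1 / k) := by positivity
      rw [e2]
      nlinarith
    have e3 : 1 / (2 * k) * (2 * L * k ^ (p / 2) * m) = L * k ^ (p / 2 - 1) * m := by
      rw [Real.rpow_sub_one (by linarith)]; field_simp
    have h4 : 1 / (2 * k) * ∫ ω, |∑ j ∈ S, ξ j ω| ^ p ∂μ ≤ L * k ^ (p / 2 - 1) * m := by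
      rw [← e3]; exact mul_le_mul_of_nonneg_left ih (by positivity)
    have h5 : L * k ^ (p / 2 - 1) * ∫ ω, |ξ i ω| ^ p ∂μ ≤ L * k ^ (p / 2 - 1) * m :=
      mul_le_mul_of_nonneg_left (hm i) (by positivity)
    have h6 := mul_le_mul_of_nonneg_left hb (by positivity : 0 ≤ 2 * L * m)
    nlinarith

lemma log_mean {n : ℕ} (hn : 1 ≤ n) (t : ℝ) (ht : 2 < t) (a : Fin n → ℝ) (ha : ∀ i, 0 < a i) :
    |Real.log ((∑ k, a k) / n)| ^ t ≤ t ^ t * ((∑ k, (a k + |Real.log (a k)| ^ t)) / n) := by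
  have hn0 : (0 : ℝ) < n := by exact_mod_cast hn
  have : Nonempty (Fin n) := ⟨⟨0, hn⟩⟩
  have hsum : 0 < ∑ k, a k := Finset.sum_pos (fun i _ => ha i) Finset.univ_nonempty
  set y := (∑ k, a k) / n with hy
  have hy0 : 0 < y := by positivity
  have htt : 1 ≤ t ^ t := Real.one_le_rpow (by linarith) (by linarith)
  have e : (∑ k, (a k + |Real.log (a k)| ^ t)) / n = y + (∑ k, |Real.log (a k)| ^ t) / n := by
    rw [Finset.sum_add_distrib, add_div]
  have h2 : 0 ≤ (∑ k, |Real.log (a k)| ^ t) / n := by positivity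
  rw [e]
  rcases le_total 1 y with h | h
  · have hl := Real.log_nonneg h
    rw [abs_of_nonneg hl]
    have h1 : Real.log y ≤ t * y ^ (1 / t) := by
      have := Real.log_le_rpow_div hy0.le (by positivity : 0 < 1 / t)
      refine this.trans (le_of_eq ?_)
      field_simp
    have h3 : Real.log y ^ t ≤ t ^ t * y := by
      refine (Real.rpow_le_rpow hl h1 (by linarith)).trans (le_of_eq ?_)
      rw [Real.mul_rpow (by linarith) (by positivity), ← Real.rpow_mul hy0.le,
        one_div_mul_cancel (by linarith), Real.rpow_one]
    nlinarith
  · have hl := Real.log_nonpos hy0.le h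
    rw [abs_of_nonpos hl]
    have hw1 : ∑ i : Fin n, (1 / (n : ℝ)) = 1 := by simp; field_simp
    have hj := strictConcaveOn_log_Ioi.concaveOn.le_map_sum (t := Finset.univ)
      (w := fun _ : Fin n => 1 / (n : ℝ)) (p := a) (fun _ _ => by positivity) hw1
      (fun i _ => ha i)
    have hj2 := Real.rpow_arith_mean_le_arith_mean_rpow Finset.univ
      (fun _ : Fin n => 1 / (n : ℝ)) (fun i => |Real.log (a i)|) (fun _ _ => by positivity) hw1
      (fun i _ => abs_nonneg _) (by linarith : 1 ≤ t)
    simp only [smul_eq_mul, ← Finset.mul_sum] at hj hj2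
    have e2 : 1 / (n : ℝ) * ∑ k, a k = y := by rw [hy]; ring
    rw [e2] at hj
    have h3 : -Real.log y ≤ 1 / (n : ℝ) * ∑ i, |Real.log (a i)| := by
      have : -(∑ i, Real.log (a i)) ≤ ∑ i, |Real.log (a i)| := by
        rw [← Finset.sum_neg_distrib]
        exact Finset.sum_le_sum fun i _ => neg_le_abs _
      have := mul_le_mul_of_nonneg_left this (by positivity : 0 ≤ 1 / (n : ℝ))
      linarith
    have h4 := (Real.rpow_le_rpow (by linarith) h3 (by linarith : 0 ≤ t)).trans hj2
    have e3 : 1 / (n : ℝ) * ∑ i, |Real.log (a i)| ^ t = (∑ i, |Real.log (a i)| ^ t) / n := by ring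
    rw [e3] at h4
    nlinarith

lemma delta_pow (t : ℝ) (ht : 2 < t) (y z : ℝ) (hy : 0 < y) (hz : 0 < z) :
    |Real.log ((y + z) / 2) - (Real.log y + Real.log z) / 2| ^ t ≤
      2 ^ t * (|Real.log y| ^ t + |Real.log z| ^ t) := by
  have hL : |Real.log ((y + z) / 2)| ≤ max |Real.log y| |Real.log z| := by
    rcases le_total y z with h | h
    · have h1 := Real.log_le_log hy (by linarith : y ≤ (y + z) / 2)
      have h2 := Real.log_le_log (by positivity) (by linarith : (y + z) / 2 ≤ z)
      exact abs_le_max_abs_abs h1 h2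
    · have h1 := Real.log_le_log hz (by linarith : z ≤ (y + z) / 2)
      have h2 := Real.log_le_log (by positivity) (by linarith : (y + z) / 2 ≤ y)
      rw [max_comm]
      exact abs_le_max_abs_abs h1 h2
  have hD : |Real.log ((y + z) / 2) - (Real.log y + Real.log z) / 2| ≤
      2 * max |Real.log y| |Real.log z| := by
    have h1 := abs_le.1 hL
    have h2 := abs_le.1 (le_max_left |Real.log y| |Real.log z|)
    have h3 := abs_le.1 (le_max_right |Real.log y| |Real.log z|)
    rw [abs_le]; constructor <;> linarith
  refine (Real.rpow_le_rpow (abs_nonneg _) hD (by linarith)).trans ?_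
  rw [Real.mul_rpow (by norm_num) (by positivity)]
  refine mul_le_mul_of_nonneg_left ?_ (by positivity)
  have g1 : 0 ≤ |Real.log y| ^ t := by positivity
  have g2 : 0 ≤ |Real.log z| ^ t := by positivity
  rcases max_cases |Real.log y| |Real.log z| with h | h <;> rw [h.1] <;> linarith

lemma delta_sq (s t r κ : ℝ) (hs : 2 < s) (ht : 2 < t) (hr4 : r ≤ 4) (hκ : 0 < κ)
    (y z : ℝ) (hy : 0 < y) (hz : 0 < z) :
    (Real.log ((y + z) / 2) - (Real.log y + Real.log z) / 2) ^ 2 ≤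
      2 * (|y - 1| ^ r + |z - 1| ^ r)
      + κ * |Real.log ((y + z) / 2) - (Real.log y + Real.log z) / 2| ^ t
      + κ ^ (-2 / (t - 2)) * 2 ^ s * (|y - 1| ^ s + |z - 1| ^ s) := by
  set Δ := Real.log ((y + z) / 2) - (Real.log y + Real.log z) / 2 with hΔ
  have p1 : 0 ≤ |y - 1| ^ r := by positivity
  have p2 : 0 ≤ |z - 1| ^ r := by positivity
  have p3 : 0 ≤ |y - 1| ^ s := by positivity
  have p4 : 0 ≤ |z - 1| ^ s := by positivity
  have p5 : 0 ≤ κ * |Δ| ^ t := by positivity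
  have p6 : 0 < κ ^ (-2 / (t - 2)) := by positivity
  have p7 : (0 : ℝ) < 2 ^ s := by positivity
  have p8 : 0 ≤ κ ^ (-2 / (t - 2)) * 2 ^ s * (|y - 1| ^ s + |z - 1| ^ s) := by positivity
  by_cases hE : |y - 1| ≤ 1 / 2 ∧ |z - 1| ≤ 1 / 2
  · have hup : ∀ v : ℝ, 0 < v → Real.log v ≤ v - 1 := fun v hv => Real.log_le_sub_one_of_pos hv
    have hlo : ∀ v : ℝ, |v - 1| ≤ 1 / 2 → (v - 1) - 2 * (v - 1) ^ 2 ≤ Real.log v := by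
      intro v hv
      have hv := abs_le.1 hv
      have hv0 : 0 < v := by linarith
      have := Real.one_sub_inv_le_log_of_pos hv0
      refine le_trans ?_ this
      have : v * v⁻¹ = 1 := mul_inv_cancel₀ hv0.ne'
      have hvi : v⁻¹ ≤ 2 := by
        rw [inv_le_comm₀ hv0 (by norm_num)]; linarith
      have e : 1 - v⁻¹ = (v - 1) - (v - 1) ^ 2 * v⁻¹ := by field_simp; ring
      rw [e]
      nlinarith [sq_nonneg (v - 1)]
    have hm : |(y + z) / 2 - 1| ≤ 1 / 2 := by
      have h1 := abs_le.1 hE.1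
      have h2 := abs_le.1 hE.2
      rw [abs_le]; constructor <;> linarith
    have hA : |Δ| ≤ (y - 1) ^ 2 + (z - 1) ^ 2 := by
      have a1 := hup _ hy
      have a2 := hup _ hz
      have a3 := hup ((y + z) / 2) (by positivity)
      have a4 := hlo _ hE.1
      have a5 := hlo _ hE.2
      have a6 := hlo _ hm
      rw [abs_le]
      constructor
      · nlinarith [sq_nonneg (y - z)]
      · nlinarith
    have h4 : ∀ v : ℝ, |v| ≤ 1 / 2 → v ^ 4 ≤ |v| ^ r := by
      intro v hv
      rcases eq_or_ne v 0 with rfl | h0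
      · simp; positivity
      have : v ^ 4 = |v| ^ (4 : ℝ) := by
        rw [show (4 : ℝ) = ((4 : ℕ) : ℝ) by norm_num, Real.rpow_natCast]
        exact (Even.pow_abs (by decide) v).symm
      rw [this]
      exact Real.rpow_le_rpow_of_exponent_ge (abs_pos.2 h0) (by linarith) hr4
    have h5 := h4 _ hE.1
    have h6 := h4 _ hE.2
    have h7 : Δ ^ 2 ≤ ((y - 1) ^ 2 + (z - 1) ^ 2) ^ 2 := by
      rw [← sq_abs]; exact pow_le_pow_left₀ (abs_nonneg _) hA 2
    nlinarith [sq_nonneg ((y - 1) ^ 2 - (z - 1) ^ 2)]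
  · have h1 : 1 ≤ 2 ^ s * (|y - 1| ^ s + |z - 1| ^ s) := by
      have aux : ∀ v : ℝ, 1 / 2 < |v| → 1 ≤ 2 ^ s * |v| ^ s := by
        intro v hv
        rw [← Real.mul_rpow (by norm_num) (by positivity)]
        exact Real.one_le_rpow (by linarith) (by linarith)
      rw [not_and_or, not_le, not_le] at hE
      rcases hE with h | h <;> have := aux _ h <;> nlinarith
    have h2 : Δ ^ 2 ≤ κ * |Δ| ^ t + κ ^ (-2 / (t - 2)) := by
      by_cases hc : |Δ| ≤ κ ^ (-1 / (t - 2))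
      · have : Δ ^ 2 ≤ κ ^ (-2 / (t - 2)) := by
          rw [← sq_abs]
          refine (pow_le_pow_left₀ (abs_nonneg _) hc 2).trans (le_of_eq ?_)
          rw [← Real.rpow_natCast, ← Real.rpow_mul hκ.le]; congr 1; push_cast; ring
        linarith
      · push Not at hc
        have hd : 0 < |Δ| := lt_trans (by positivity) hc
        have h3 := Real.rpow_le_rpow (by positivity) hc.le (by linarith : 0 ≤ t - 2)
        rw [← Real.rpow_mul hκ.le, div_mul_cancel₀ _ (by linarith), Real.rpow_neg_one] at h3
        have h4 : 1 ≤ κ * |Δ| ^ (t - 2) := by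
          have := mul_le_mul_of_nonneg_left h3 hκ.le
          rwa [mul_inv_cancel₀ hκ.ne'] at this
        have h5 : |Δ| ^ t = |Δ| ^ (t - 2) * Δ ^ 2 := by
          rw [← sq_abs Δ, ← Real.rpow_natCast, ← Real.rpow_add hd]; norm_num
        rw [h5]
        nlinarith [sq_nonneg Δ]
    nlinarith

lemma mean_moment {𝒵 : Type*} [MeasurableSpace 𝒵] (s p L : ℝ) (hp : 2 < p) (hps : p ≤ s)
    (hL1 : 1 ≤ L)
    (hL : ∀ K : ℝ, 1 ≤ K → ∀ a b : ℝ,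
      |a + b| ^ p ≤ |a| ^ p + 1 / (2 * K) * |a| ^ p + p * ((a * |a| ^ (p - 2)) * b)
      + L * K ^ (p / 2 - 1) * |b| ^ p)
    (Q : Measure 𝒵) [IsProbabilityMeasure Q] (f : 𝒵 → ℝ) (hf : Measurable f)
    (hpos : ∀ z, 0 < f z) (hfi : Integrable f Q) (hnorm : ∫ z, f z ∂Q = 1)
    (hfs : Integrable (fun z => f z ^ s) Q) (n N : ℕ) (hn : 1 ≤ n) (e : Fin n → Fin N)
    (he : Function.Injective e) :
    Integrable (fun zs : Fin N → 𝒵 => |(∑ k, f (zs (e k))) / n - 1| ^ p) (Measure.pi fun _ => Q) ∧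
    ∫ zs : Fin N → 𝒵, |(∑ k, f (zs (e k))) / n - 1| ^ p ∂(Measure.pi fun _ => Q)
      ≤ 2 * L * (n : ℝ) ^ (-(p / 2)) * (2 + ∫ z, f z ^ s ∂Q) := by
  have hn0 : (0 : ℝ) < n := by exact_mod_cast hn
  have hpw : ∀ z, |f z - 1| ^ p ≤ 2 + f z ^ s := by
    intro z
    have hz := hpos z
    have hs0 : 0 ≤ f z ^ s := by positivity
    rcases le_total (f z) 1 with h | h
    · have : |f z - 1| ^ p ≤ 1 := by
        apply Real.rpow_le_one (abs_nonneg _) _ (by linarith)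
        rw [abs_le]; constructor <;> linarith
      linarith
    · have h1 : |f z - 1| ^ p ≤ f z ^ p := by
        apply Real.rpow_le_rpow (abs_nonneg _) _ (by linarith)
        rw [abs_le]; constructor <;> linarith
      have := Real.rpow_le_rpow_of_exponent_le h hps
      linarith
  have hgm : Measurable (fun z => |f z - 1| ^ p) := by fun_prop
  have hbi : Integrable (fun z => 2 + f z ^ s) Q := (integrable_const 2).add hfs
  have hgi : Integrable (fun z => |f z - 1| ^ p) Q := by
    refine Integrable.mono' hbi hgm.aestronglyMeasurable (Filter.Eventually.of_forall fun z => ?_)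
    rw [Real.norm_of_nonneg (by positivity)]; exact hpw z
  have hgb : ∫ z, |f z - 1| ^ p ∂Q ≤ 2 + ∫ z, f z ^ s ∂Q := by
    have := integral_mono hgi hbi hpw
    rw [integral_add (integrable_const 2) hfs] at this
    simpa using this
  have hind : iIndepFun (fun (k : Fin n) (zs : Fin N → 𝒵) => f (zs (e k)) - 1)
      (Measure.pi fun _ : Fin N => Q) := by
    have h0 : iIndepFun (fun (k : Fin N) (zs : Fin N → 𝒵) => (fun z => f z - 1) (zs k))
      (Measure.pi fun _ : Fin N => Q) :=
      iIndepFun_pi (X := fun _ z => f z - 1) (fun i => (hf.sub_const 1).aemeasurable)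
    exact h0.precomp he
  obtain ⟨h1, h2⟩ := mz_core p L hp hL1 hL (Measure.pi fun _ : Fin N => Q)
    (fun (k : Fin n) (zs : Fin N → 𝒵) => f (zs (e k)) - 1) hind (fun i => by fun_prop)
    (fun i => integrable_comp_eval (μ := fun _ : Fin N => Q) (i := e i) hgi)
    (fun i => by
      rw [integral_comp_eval (μ := fun _ : Fin N => Q) (i := e i) (f := fun z => f z - 1)
        (hf.sub_const 1).aestronglyMeasurable, integral_sub hfi (integrable_const 1), hnorm]
      simp)
    (2 + ∫ z, f z ^ s ∂Q)
    (fun i => by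
      rw [integral_comp_eval (μ := fun _ : Fin N => Q) (i := e i) (f := fun z => |f z - 1| ^ p)
        hgi.aestronglyMeasurable]
      exact hgb) Finset.univ
  have hid : ∀ zs : Fin N → 𝒵, |(∑ k, f (zs (e k))) / n - 1| ^ p =
      (n : ℝ) ^ (-p) * |∑ k, (f (zs (e k)) - 1)| ^ p := by
    intro zs
    have : (∑ k, f (zs (e k))) / n - 1 = (∑ k, (f (zs (e k)) - 1)) / n := by
      rw [Finset.sum_sub_distrib]; simp; field_simp
    rw [this, abs_div, abs_of_pos hn0, Real.div_rpow (abs_nonneg _) hn0.le, Real.rpow_neg hn0.le]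
    ring
  simp_rw [hid]
  refine ⟨h1.const_mul _, ?_⟩
  rw [integral_const_mul]
  refine (mul_le_mul_of_nonneg_left h2 (by positivity)).trans (le_of_eq ?_)
  rw [Finset.card_univ, Fintype.card_fin]
  have : (n : ℝ) ^ (-(p / 2)) = (n : ℝ) ^ (-p) * (n : ℝ) ^ (p / 2) := by
    rw [← Real.rpow_add hn0]; congr 1; ring
  rw [this]; ring

def corr {𝒵 : Type*} (f : 𝒵 → ℝ) (n : ℕ) (zs : Fin (2 * n) → 𝒵) : ℝ :=
  mlmcCorrection (fun _ : Unit => f) n () zs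

def eA (n : ℕ) (k : Fin n) : Fin (2 * n) := ⟨k.1, by have := k.2; omega⟩
def eB (n : ℕ) (k : Fin n) : Fin (2 * n) := ⟨n + k.1, by have := k.2; omega⟩

lemma sum_split (n : ℕ) (g : Fin (2 * n) → ℝ) :
    ∑ k, g k = ∑ k, g (eA n k) + ∑ k, g (eB n k) := by
  rw [← Equiv.sum_comp (finCongr (by omega : n + n = 2 * n)), Fin.sum_univ_add]
  rfl

lemma corr_eq {𝒵 : Type*} (f : 𝒵 → ℝ) (n : ℕ) (zs : Fin (2 * n) → 𝒵) :
    corr f n zs = Real.log (((∑ k, f (zs (eA n k))) / n + (∑ k, f (zs (eB n k))) / n) / 2)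
      - (Real.log ((∑ k, f (zs (eA n k))) / n) + Real.log ((∑ k, f (zs (eB n k))) / n)) / 2 := by
  have : ((∑ k, f (zs (eA n k))) / n + (∑ k, f (zs (eB n k))) / n) / 2
      = (∑ k, f (zs k)) / (2 * n) := by
    rw [sum_split n (fun k => f (zs k)), ← add_div, div_div, mul_comm]
  rw [this]; rfl

lemma mean_h {𝒵 : Type*} [MeasurableSpace 𝒵] (Q : Measure 𝒵) [IsProbabilityMeasure Q]
    (h : 𝒵 → ℝ) (hi : Integrable h Q) (n N : ℕ) (hn : 1 ≤ n) (e : Fin n → Fin N) :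
    Integrable (fun zs : Fin N → 𝒵 => (∑ k, h (zs (e k))) / n) (Measure.pi fun _ => Q) ∧
    ∫ zs : Fin N → 𝒵, (∑ k, h (zs (e k))) / n ∂(Measure.pi fun _ => Q) = ∫ z, h z ∂Q := by
  have hn0 : (0 : ℝ) < n := by exact_mod_cast hn
  have h1 : ∀ k, Integrable (fun zs : Fin N → 𝒵 => h (zs (e k))) (Measure.pi fun _ => Q) :=
    fun k => integrable_comp_eval (μ := fun _ : Fin N => Q) hi
  refine ⟨(integrable_finsetSum _ fun k _ => h1 k).div_const _, ?_⟩
  rw [integral_div, integral_finsetSum _ fun k _ => h1 k]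
  have : ∀ k, ∫ zs : Fin N → 𝒵, h (zs (e k)) ∂(Measure.pi fun _ => Q) = ∫ z, h z ∂Q := fun k =>
    integral_comp_eval (μ := fun _ : Fin N => Q) hi.aestronglyMeasurable
  simp_rw [this]
  simp; field_simp

lemma perx (s t : ℝ) (hs : 2 < s) (ht : 2 < t) : ∃ C : ℝ, 0 < C ∧
    ∀ {𝒵 : Type*} [MeasurableSpace 𝒵] (Q : Measure 𝒵) [IsProbabilityMeasure Q] (f : 𝒵 → ℝ),
    Measurable f → (∀ z, 0 < f z) → ∫ z, f z ∂Q = 1 → Integrable (fun z => f z ^ s) Q →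
    Integrable (fun z => |Real.log (f z)| ^ t) Q → ∀ n : ℕ, 1 ≤ n →
    Integrable (fun zs => corr f n zs) (Measure.pi fun _ => Q) ∧
    Integrable (fun zs => corr f n zs ^ 2) (Measure.pi fun _ => Q) ∧
    ∫ zs, corr f n zs ^ 2 ∂(Measure.pi fun _ => Q) ≤
      C * (n : ℝ) ^ (-(min (s * (t - 2) / (2 * t)) 2)) *
        (2 + ∫ z, f z ^ s ∂Q + ∫ z, |Real.log (f z)| ^ t ∂Q) := by
  obtain ⟨Ls, hLs1, hLs⟩ := tay4 s hs
  set r := min s 4 with hr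
  have hr2 : 2 < r := lt_min hs (by norm_num)
  have hrs : r ≤ s := min_le_left _ _
  have hr4 : r ≤ 4 := min_le_right _ _
  obtain ⟨Lr, hLr1, hLr⟩ := tay4 r hr2
  refine ⟨8 * Lr + 2 * (2 ^ t * t ^ t) + 4 * Ls * 2 ^ s, by positivity, ?_⟩
  intro 𝒵 _ Q _ f hf hpos hnorm hfs hft n hn
  have hn0 : (0 : ℝ) < n := by exact_mod_cast hn
  have hn1 : (1 : ℝ) ≤ n := by exact_mod_cast hn
  have : Nonempty (Fin n) := ⟨⟨0, hn⟩⟩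
  have hfi : Integrable f Q := by
    by_contra hc
    rw [integral_undef hc] at hnorm
    norm_num at hnorm
  have hAinj : Function.Injective (eA n) := fun i j h => by
    simp only [eA, Fin.mk.injEq] at h; exact Fin.ext h
  have hBinj : Function.Injective (eB n) := fun i j h => by
    simp only [eB, Fin.mk.injEq] at h; exact Fin.ext (by omega)
  set b' := s * (t - 2) / (2 * t) with hb'
  set κ := (n : ℝ) ^ (-b') with hκ
  have hκ0 : 0 < κ := by positivity
  obtain ⟨iA1, jA1⟩ := mean_moment s r Lr hr2 hrs hLr1 hLr Q f hf hpos hfi hnorm hfs n (2 * n) hn _ hAinj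
  obtain ⟨iB1, jB1⟩ := mean_moment s r Lr hr2 hrs hLr1 hLr Q f hf hpos hfi hnorm hfs n (2 * n) hn _ hBinj
  obtain ⟨iA2, jA2⟩ := mean_moment s s Ls hs le_rfl hLs1 hLs Q f hf hpos hfi hnorm hfs n (2 * n) hn _ hAinj
  obtain ⟨iB2, jB2⟩ := mean_moment s s Ls hs le_rfl hLs1 hLs Q f hf hpos hfi hnorm hfs n (2 * n) hn _ hBinj
  have hhi : Integrable (fun z => f z + |Real.log (f z)| ^ t) Q := hfi.add hft
  obtain ⟨iA3, jA3⟩ := mean_h Q _ hhi n (2 * n) hn (eA n)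
  obtain ⟨iB3, jB3⟩ := mean_h Q _ hhi n (2 * n) hn (eB n)
  have hhv : ∫ z, (f z + |Real.log (f z)| ^ t) ∂Q = 1 + ∫ z, |Real.log (f z)| ^ t ∂Q := by
    rw [integral_add hfi hft, hnorm]
  rw [hhv] at jA3 jB3
  set m := ∫ z, f z ^ s ∂Q with hm
  set T := ∫ z, |Real.log (f z)| ^ t ∂Q with hT
  have hm0 : 0 ≤ m := integral_nonneg fun z => Real.rpow_nonneg (hpos z).le _
  have hT0 : 0 ≤ T := integral_nonneg fun z => by positivity
  have hpw : ∀ zs : Fin (2 * n) → 𝒵, corr f n zs ^ 2 ≤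
      2 * (|(∑ k, f (zs (eA n k))) / n - 1| ^ r + |(∑ k, f (zs (eB n k))) / n - 1| ^ r)
      + κ * (2 ^ t * t ^ t) * ((∑ k, (f (zs (eA n k)) + |Real.log (f (zs (eA n k)))| ^ t)) / n
          + (∑ k, (f (zs (eB n k)) + |Real.log (f (zs (eB n k)))| ^ t)) / n)
      + κ ^ (-2 / (t - 2)) * 2 ^ s *
        (|(∑ k, f (zs (eA n k))) / n - 1| ^ s + |(∑ k, f (zs (eB n k))) / n - 1| ^ s) := by
    intro zs
    have hyA : 0 < (∑ k, f (zs (eA n k))) / n :=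
      div_pos (Finset.sum_pos (fun i _ => hpos _) Finset.univ_nonempty) hn0
    have hyB : 0 < (∑ k, f (zs (eB n k))) / n :=
      div_pos (Finset.sum_pos (fun i _ => hpos _) Finset.univ_nonempty) hn0
    have h1 := delta_sq s t r κ hs ht hr4 hκ0 _ _ hyA hyB
    have h2 := delta_pow t ht _ _ hyA hyB
    have h3 := log_mean hn t ht (fun k => f (zs (eA n k))) (fun _ => hpos _)
    have h4 := log_mean hn t ht (fun k => f (zs (eB n k))) (fun _ => hpos _)
    have h5 := mul_le_mul_of_nonneg_left (add_le_add h3 h4)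
      (by positivity : (0 : ℝ) ≤ 2 ^ t)
    have h6 := mul_le_mul_of_nonneg_left (h2.trans h5) hκ0.le
    rw [corr_eq]
    linarith
  have hcm : Measurable (fun zs : Fin (2 * n) → 𝒵 => corr f n zs) := by
    simp_rw [corr_eq]
    fun_prop
  have J1 := (iA1.add iB1).const_mul 2
  have J2 := (iA3.add iB3).const_mul (κ * (2 ^ t * t ^ t))
  have J3 := (iA2.add iB2).const_mul (κ ^ (-2 / (t - 2)) * 2 ^ s)
  have hsq : Integrable (fun zs => corr f n zs ^ 2) (Measure.pi fun _ => Q) := by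
    refine Integrable.mono' ((J1.add J2).add J3) (hcm.pow_const 2).aestronglyMeasurable
      (Filter.Eventually.of_forall fun zs => ?_)
    rw [Real.norm_of_nonneg (sq_nonneg _)]
    exact hpw zs
  refine ⟨?_, hsq, ?_⟩
  · refine Integrable.mono' ((integrable_const (1 : ℝ)).add hsq) hcm.aestronglyMeasurable
      (Filter.Eventually.of_forall fun zs => ?_)
    simp only [Real.norm_eq_abs, Pi.add_apply]
    rw [abs_le]; constructor <;> nlinarith [sq_nonneg (corr f n zs - 1), sq_nonneg (corr f n zs + 1)]
  have key := integral_mono hsq ((J1.add J2).add J3) hpw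
  rw [integral_add' (J1.add J2) J3, integral_add' J1 J2, integral_const_mul, integral_const_mul,
    integral_const_mul, integral_add' iA1 iB1, integral_add' iA3 iB3, integral_add' iA2 iB2,
    jA3, jB3] at key
  refine key.trans ?_
  set bb := min b' 2 with hbb
  set N := (n : ℝ) ^ (-bb) with hN
  have hN0 : 0 < N := by positivity
  have ht0 : 0 < t := by linarith
  have k1 : κ ≤ N := Real.rpow_le_rpow_of_exponent_le hn1 (by
    have : bb ≤ b' := min_le_left _ _
    linarith)
  have k2 : (n : ℝ) ^ (-(r / 2)) ≤ N := Real.rpow_le_rpow_of_exponent_le hn1 (by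
    have hb1 : b' ≤ s / 2 := by
      rw [hb', div_le_div_iff₀ (by positivity) (by norm_num)]
      nlinarith
    have : bb ≤ r / 2 := by
      rcases min_cases s 4 with h | h
      · rw [hr, h.1]; exact (min_le_left _ _).trans hb1
      · rw [hr, h.1]; exact (min_le_right _ _).trans (by norm_num)
    linarith)
  have k3 : κ ^ (-2 / (t - 2)) * (n : ℝ) ^ (-(s / 2)) = κ := by
    rw [hκ, ← Real.rpow_mul hn0.le, ← Real.rpow_add hn0]
    congr 1
    rw [hb']
    have : t - 2 ≠ 0 := by linarith
    field_simp
    ring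
  have m1 : 2 * Lr * (n : ℝ) ^ (-(r / 2)) * (2 + m) ≤ 2 * Lr * N * (2 + m) := by gcongr
  have m2 : κ * (2 ^ t * t ^ t) * (1 + T + (1 + T)) ≤ N * (2 ^ t * t ^ t) * (1 + T + (1 + T)) := by
    gcongr
  have q0 : 0 ≤ κ ^ (-2 / (t - 2)) * (2 : ℝ) ^ s := by positivity
  have m3 := mul_le_mul_of_nonneg_left (add_le_add jA2 jB2) q0
  have m4 : κ ^ (-2 / (t - 2)) * 2 ^ s * (2 * Ls * (n : ℝ) ^ (-(s / 2)) * (2 + m)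
      + 2 * Ls * (n : ℝ) ^ (-(s / 2)) * (2 + m)) = κ * (4 * Ls * 2 ^ s * (2 + m)) := by
    linear_combination (4 * Ls * 2 ^ s * (2 + m)) * k3
  have m5 : κ * (4 * Ls * 2 ^ s * (2 + m)) ≤ N * (4 * Ls * 2 ^ s * (2 + m)) := by gcongr
  have z1 : 0 ≤ N * (8 * Lr) * T := by positivity
  have z2 : 0 ≤ N * (4 * Ls * 2 ^ s) * T := by positivity
  have z3 : 0 ≤ N * (2 * (2 ^ t * t ^ t)) * (1 + m) := by positivity
  rw [m4] at m3
  linarith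

/-- **Variance decay of the coupled MLMC corrections for the model evidence**
(Theorem 2 of the paper).  Let `X ~ ν` and, conditionally on `X`, let `Z₁, Z₂, …` be i.i.d.
with law `q(·; X)`; let `w > 0` be the normalized importance weight, with
`∫ w(x,z) q(dz;x) = 1` for a.e. `x`.  If `E[w^s] < ∞` and `E[|log w|^t] < ∞` for some
`s, t > 2` with `(s−2)(t−2) ≥ 4`, then the coupled level-`ℓ` correction
`Δ_ℓ = log Ȳ_{2^ℓ} − ½(log Ȳ_{2^{ℓ−1}}⁽ᵃ⁾ + log Ȳ_{2^{ℓ−1}}⁽ᵇ⁾)` satisfies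
`Var[Δ_ℓ] ≤ c·2^{−βℓ}` with `β = min(s(t−2)/(2t), 2)`. -/
theorem mlmc_evidence_variance_decay
    {𝒳 𝒵 : Type*} [MeasurableSpace 𝒳] [MeasurableSpace 𝒵]
    (ν : Measure 𝒳) [IsProbabilityMeasure ν]
    (q : Kernel 𝒳 𝒵) [IsMarkovKernel q]
    (w : 𝒳 → 𝒵 → ℝ) (hw_meas : Measurable (Function.uncurry w))
    (hw_pos : ∀ x z, 0 < w x z)
    (hw_norm : ∀ᵐ x ∂ν, ∫ z, w x z ∂(q x) = 1)
    (s t : ℝ) (hs : 2 < s) (ht : 2 < t) (hst : 4 ≤ (s - 2) * (t - 2))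
    (hws : Integrable (fun p : 𝒳 × 𝒵 => w p.1 p.2 ^ s) (ν ⊗ₘ q))
    (hwt : Integrable (fun p : 𝒳 × 𝒵 => |Real.log (w p.1 p.2)| ^ t) (ν ⊗ₘ q)) :
    ∃ c > (0 : ℝ), ∀ ℓ : ℕ, 1 ≤ ℓ →
      mlmcCorrectionVar ν q w (2 ^ (ℓ - 1))
        ≤ c * (2 : ℝ) ^ (-(min (s * (t - 2) / (2 * t)) 2) * ℓ) := by
  obtain ⟨C, hC0, hC⟩ := perx s t hs ht
  set b := min (s * (t - 2) / (2 * t)) 2 with hb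
  have hws' := (Measure.integrable_compProd_iff hws.aestronglyMeasurable).1 hws
  have hwt' := (Measure.integrable_compProd_iff hwt.aestronglyMeasurable).1 hwt
  have e1 : ∀ x z, ‖w x z ^ s‖ = w x z ^ s := fun x z =>
    Real.norm_of_nonneg (Real.rpow_nonneg (hw_pos x z).le _)
  have e2 : ∀ x z, ‖|Real.log (w x z)| ^ t‖ = |Real.log (w x z)| ^ t := fun x z =>
    Real.norm_of_nonneg (by positivity)
  simp only [e1, e2] at hws' hwt'
  obtain ⟨as, is⟩ := hws'
  obtain ⟨at', it⟩ := hwt'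
  set H : 𝒳 → ℝ := fun x => 2 + ∫ z, w x z ^ s ∂(q x) + ∫ z, |Real.log (w x z)| ^ t ∂(q x) with hH
  have hHi : Integrable H ν := ((integrable_const 2).add is).add it
  have hH0 : ∀ x, 0 ≤ H x := fun x => by
    have h1 : 0 ≤ ∫ z, w x z ^ s ∂(q x) :=
      integral_nonneg fun z => Real.rpow_nonneg (hw_pos x z).le _
    have h2 : 0 ≤ ∫ z, |Real.log (w x z)| ^ t ∂(q x) := integral_nonneg fun z => by positivity
    simp only [hH]; linarith
  set I := ∫ x, H x ∂ν with hI
  have hI0 : 0 ≤ I := integral_nonneg hH0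
  have main : ∀ n : ℕ, 1 ≤ n → mlmcCorrectionVar ν q w n ≤
      (2 * C * I + 2 * (1 + C * I) ^ 2) * (n : ℝ) ^ (-b) := by
    intro n hn
    have hn0 : (0 : ℝ) < n := by exact_mod_cast hn
    have hx : ∀ᵐ x ∂ν,
        Integrable (fun zs => mlmcCorrection w n x zs) (Measure.pi fun _ => q x) ∧
        Integrable (fun zs => mlmcCorrection w n x zs ^ 2) (Measure.pi fun _ => q x) ∧
        ∫ zs, mlmcCorrection w n x zs ^ 2 ∂(Measure.pi fun _ => q x) ≤
          C * (n : ℝ) ^ (-b) * H x := by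
      filter_upwards [as, at', hw_norm] with x h1 h2 h3
      exact hC (q x) (w x) (hw_meas.comp measurable_prodMk_left) (hw_pos x) h3 h1 h2 n hn
    set N := (n : ℝ) ^ (-b) with hN
    set ε := (n : ℝ) ^ (-(b / 2)) with hε
    have hε0 : 0 < ε := by positivity
    have hεN : N = ε * ε := by
      rw [hN, hε, ← Real.rpow_add hn0]; congr 1; ring
    have hN0 : 0 < N := by positivity
    unfold mlmcCorrectionVar
    set M := jointExp ν q (2 * n) (mlmcCorrection w n) with hM
    have hMb : |M| ≤ ε * (1 + C * I) := by
      have hi : Integrable (fun x => ε + ε * C * H x) ν :=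
        (integrable_const _).add (hHi.const_mul _)
      have h := norm_integral_le_of_norm_le (μ := ν)
        (f := fun x => ∫ zs, mlmcCorrection w n x zs ∂(Measure.pi fun _ : Fin (2 * n) => q x))
        hi (by
          filter_upwards [hx] with x ⟨h1, h2, h3⟩
          have hi2 : Integrable (fun zs => ε + ε⁻¹ * mlmcCorrection w n x zs ^ 2)
            (Measure.pi fun _ : Fin (2 * n) => q x) := (integrable_const _).add (h2.const_mul _)
          have h4 := norm_integral_le_of_norm_le hi2
            (f := fun zs => mlmcCorrection w n x zs) (Filter.Eventually.of_forall fun zs => by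
              set d := mlmcCorrection w n x zs
              rw [Real.norm_eq_abs, ← sq_abs d]
              have : ε + ε⁻¹ * |d| ^ 2 - |d| = ε⁻¹ * ((ε - |d|) ^ 2 + ε * |d|) := by
                field_simp; ring
              have h0 : 0 ≤ ε⁻¹ * ((ε - |d|) ^ 2 + ε * |d|) := by positivity
              linarith)
          rw [integral_add (integrable_const _) (h2.const_mul _), integral_const_mul] at h4
          simp only [integral_const, probReal_univ, one_smul] at h4
          refine h4.trans ?_
          have h5 := mul_le_mul_of_nonneg_left h3 (inv_nonneg.2 hε0.le)
          have h6 : ε⁻¹ * (C * N * H x) = ε * C * H x := by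
            rw [hεN]; field_simp
          linarith)
      rw [integral_add (integrable_const _) (hHi.const_mul _), integral_const_mul] at h
      simp only [integral_const, probReal_univ, one_smul] at h
      refine le_trans h (le_of_eq ?_)
      rw [← hI]; ring
    have hM2 : M ^ 2 ≤ N * (1 + C * I) ^ 2 := by
      rw [← sq_abs, hεN]
      refine (pow_le_pow_left₀ (abs_nonneg _) hMb 2).trans (le_of_eq ?_)
      ring
    have hi : Integrable (fun x => 2 * C * N * H x + 2 * M ^ 2) ν :=
      (hHi.const_mul _).add (integrable_const _)
    have hfin : jointExp ν q (2 * n) (fun x zs => (mlmcCorrection w n x zs - M) ^ 2) ≤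
        ∫ x, (2 * C * N * H x + 2 * M ^ 2) ∂ν := by
      unfold jointExp
      refine integral_mono_of_nonneg
        (Filter.Eventually.of_forall fun x => integral_nonneg fun zs => sq_nonneg _) hi ?_
      filter_upwards [hx] with x ⟨h1, h2, h3⟩
      have hi2 : Integrable (fun zs => 2 * mlmcCorrection w n x zs ^ 2 + 2 * M ^ 2)
        (Measure.pi fun _ : Fin (2 * n) => q x) := (h2.const_mul _).add (integrable_const _)
      have h4 := integral_mono_of_nonneg (f := fun zs => (mlmcCorrection w n x zs - M) ^ 2)
        (Filter.Eventually.of_forall fun zs => sq_nonneg _) hi2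
        (Filter.Eventually.of_forall fun zs => by
          simp only
          nlinarith [sq_nonneg (mlmcCorrection w n x zs + M)])
      rw [integral_add (h2.const_mul _) (integrable_const _), integral_const_mul] at h4
      simp only [integral_const, probReal_univ, one_smul] at h4
      linarith
    rw [integral_add (hHi.const_mul _) (integrable_const _), integral_const_mul] at hfin
    simp only [integral_const, probReal_univ, one_smul] at hfin
    rw [← hI] at hfin
    linarith
  refine ⟨(2 * C * I + 2 * (1 + C * I) ^ 2) * 2 ^ b, by positivity, fun ℓ hℓ => ?_⟩
  refine (main (2 ^ (ℓ - 1)) Nat.one_le_two_pow).trans (le_of_eq ?_)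
  rw [mul_assoc (2 * C * I + 2 * (1 + C * I) ^ 2), ← Real.rpow_add (by norm_num)]
  congr 1
  push_cast
  rw [← Real.rpow_natCast, ← Real.rpow_mul (by norm_num), Nat.cast_sub hℓ]
  congr 1
  push_cast
  ring
end
end

section
/- Suppose there exist real numbers s, t > 2 with (s−2)(t−2) ≥ 4 such that E[w(X, Z_1)^s] < ∞ and E[|log w(X, Z_1)|^t] < ∞. Then there exists a constant c > 0 such that for every ℓ ≥ 0 the bias of the level-2^ℓ importance-sampling estimator of the model evidence satisfies |E[log Ȳ_{2^ℓ}]| ≤ c·2^{−αℓ}, where α = min(s(t−1)/(2t), 1). (Since the weights are normalized, E[log Ȳ_K] equals the difference between the expected level-K estimator and the true model evidence.) -/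
open MeasureTheory ProbabilityTheory Finset
open scoped ENNReal

noncomputable section

lemma ebd_young (a b s t : ℝ) (ha : 0 ≤ a) (hb : 0 ≤ b) (hs : 2 < s) (ht : 2 < t)
    (hst : 4 ≤ (s - 2) * (t - 2)) : a * b ^ 2 ≤ 1 + a ^ t + b ^ s := by
  set M := 1 + a ^ t + b ^ s with hM
  have h1 : 0 ≤ a ^ t := Real.rpow_nonneg ha t
  have h2 : 0 ≤ b ^ s := Real.rpow_nonneg hb s
  have hM1 : 1 ≤ M := by linarith
  have hM0 : 0 < M := by linarith
  have hA : a ≤ M ^ (1 / t) := by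
    calc a = (a ^ t) ^ (1 / t) := by
          rw [← Real.rpow_mul ha, mul_one_div_cancel (by linarith), Real.rpow_one]
      _ ≤ M ^ (1 / t) := Real.rpow_le_rpow h1 (by linarith) (by positivity)
  have hB : b ≤ M ^ (1 / s) := by
    calc b = (b ^ s) ^ (1 / s) := by
          rw [← Real.rpow_mul hb, mul_one_div_cancel (by linarith), Real.rpow_one]
      _ ≤ M ^ (1 / s) := Real.rpow_le_rpow h2 (by linarith) (by positivity)
  calc a * b ^ 2 ≤ M ^ (1 / t) * (M ^ (1 / s)) ^ 2 := by gcongr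
    _ = M ^ (1 / t + 1 / s * 2) := by
        rw [Real.rpow_add hM0, Real.rpow_mul hM0.le]; norm_num
    _ ≤ M ^ (1 : ℝ) := by
        apply Real.rpow_le_rpow_of_exponent_le hM1
        have hs0 : 0 < s := by linarith
        have ht0 : 0 < t := by linarith
        rw [one_div_mul_eq_div, div_add_div _ _ ht0.ne' hs0.ne', div_le_one (by positivity)]
        nlinarith
    _ = M := Real.rpow_one M

lemma ebd_le_one_add_rpow (a t p : ℝ) (ha : 0 ≤ a) (hp : 0 ≤ p) (ht : p ≤ t) :
    a ^ p ≤ 1 + a ^ t := by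
  rcases le_total a 1 with h | h
  · have := Real.rpow_le_one ha h hp
    have := Real.rpow_nonneg ha t
    linarith
  · have := Real.rpow_le_rpow_of_exponent_le h ht
    linarith

lemma ebd_pointwise (n : ℕ) (hn : 0 < n) (a : Fin n → ℝ) (ha : ∀ k, 0 < a k) :
    -Real.log ((∑ k, a k) / n) ≤ (1 - (∑ k, a k) / n)
      + 2 / (n : ℝ) ^ 2 * (∑ j, (a j - 1)) ^ 2
      + ∑ k, 1 / (n : ℝ) * (4 / n * |Real.log (a k)|
          + 16 / (n : ℝ) ^ 2 * (|Real.log (a k)| * (∑ j ∈ univ.erase k, (a j - 1)) ^ 2)) := by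
  have hn0 : (0 : ℝ) < n := by exact_mod_cast hn
  have : Nonempty (Fin n) := ⟨⟨0, hn⟩⟩
  have hSpos : 0 < ∑ k, a k := Finset.sum_pos (fun k _ => ha k) univ_nonempty
  set y := (∑ k, a k) / n with hy
  have hy0 : 0 < y := div_pos hSpos hn0
  have hsum : ∑ j, (a j - 1) = n * (y - 1) := by
    rw [Finset.sum_sub_distrib, hy]; simp; field_simp
  have hsq : 2 / (n : ℝ) ^ 2 * (∑ j, (a j - 1)) ^ 2 = 2 * (y - 1) ^ 2 := by
    rw [hsum]; field_simp
  rw [hsq]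
  rcases le_or_gt (1 / 2) y with h | h
  · have h1 : -Real.log y ≤ y⁻¹ - 1 := by
      rw [← Real.log_inv]; exact Real.log_le_sub_one_of_pos (inv_pos.2 hy0)
    have h2 : y⁻¹ - 1 = (1 - y) + (1 - y) ^ 2 * y⁻¹ := by field_simp; ring
    have h3 : y⁻¹ ≤ 2 := by
      rw [inv_le_comm₀ hy0 (by norm_num)]; linarith
    have h4 : 0 ≤ ∑ k, 1 / (n : ℝ) * (4 / n * |Real.log (a k)|
          + 16 / (n : ℝ) ^ 2 * (|Real.log (a k)| * (∑ j ∈ univ.erase k, (a j - 1)) ^ 2)) :=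
      Finset.sum_nonneg fun k _ => by positivity
    nlinarith [mul_le_mul_of_nonneg_left h3 (sq_nonneg (1 - y))]
  · have hc := (strictConcaveOn_log_Ioi.concaveOn).le_map_sum (t := univ)
      (w := fun _ : Fin n => 1 / (n : ℝ)) (p := a) (fun _ _ => by positivity)
      (by simp; field_simp) (fun k _ => ha k)
    simp only [smul_eq_mul, ← Finset.mul_sum] at hc
    rw [one_div_mul_eq_div (n : ℝ) (∑ k, a k), ← hy] at hc
    have key : ∀ k, 1 / (n : ℝ) * -Real.log (a k) ≤ 1 / (n : ℝ) * (4 / n * |Real.log (a k)|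
          + 16 / (n : ℝ) ^ 2 * (|Real.log (a k)| * (∑ j ∈ univ.erase k, (a j - 1)) ^ 2)) := by
      intro k
      apply mul_le_mul_of_nonneg_left _ (by positivity)
      set D := ∑ j ∈ univ.erase k, (a j - 1) with hD
      have hone : 1 ≤ 4 / (n : ℝ) + 16 / (n : ℝ) ^ 2 * D ^ 2 := by
        rcases le_or_gt (n : ℝ) 4 with h4 | h4
        · have : 1 ≤ 4 / (n : ℝ) := by rw [le_div_iff₀ hn0]; linarith
          have : 0 ≤ 16 / (n : ℝ) ^ 2 * D ^ 2 := by positivity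
          linarith
        · have e : (a k - 1) + D = n * (y - 1) := by
            rw [← hsum, hD, Finset.add_sum_erase _ (fun j => a j - 1) (mem_univ k)]
          have hk := ha k
          have hDl : (n : ℝ) / 4 ≤ -D := by nlinarith
          have : 1 ≤ 16 / (n : ℝ) ^ 2 * D ^ 2 := by
            rw [div_mul_eq_mul_div, le_div_iff₀ (by positivity)]
            nlinarith
          have : 0 ≤ 4 / (n : ℝ) := by positivity
          linarith
      have := neg_le_abs (Real.log (a k))
      nlinarith [mul_le_mul_of_nonneg_left hone (abs_nonneg (Real.log (a k)))]
    have hsumkey := Finset.sum_le_sum fun k (_ : k ∈ univ) => key k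
    rw [← Finset.mul_sum, Finset.sum_neg_distrib] at hsumkey
    nlinarith [sq_nonneg (y - 1)]

lemma ebd_sumsq {𝒵 : Type*} [MeasurableSpace 𝒵] (μ : Measure 𝒵) [IsProbabilityMeasure μ]
    (u : 𝒵 → ℝ) (hu : Measurable u) (hu2 : MemLp u 2 μ) (hu0 : ∫ z, u z ∂μ = 0)
    (n : ℕ) (A : Finset (Fin n)) :
    Integrable (fun zs : Fin n → 𝒵 => (∑ j ∈ A, u (zs j)) ^ 2) (Measure.pi fun _ => μ) ∧
    ∫ zs, (∑ j ∈ A, u (zs j)) ^ 2 ∂(Measure.pi fun _ : Fin n => μ) = #A * ∫ z, u z ^ 2 ∂μ := by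
  have hm : ∀ j : Fin n, MemLp (fun zs : Fin n → 𝒵 => u (zs j)) 2 (Measure.pi fun _ => μ) :=
    fun j => hu2.comp_measurePreserving (measurePreserving_eval (fun _ : Fin n => μ) j)
  have hind : iIndepFun (fun (i : Fin n) (ω : Fin n → 𝒵) => u (ω i)) (Measure.pi fun _ => μ) :=
    iIndepFun_pi (X := fun _ => u) (fun _ => hu.aemeasurable)
  have hS : MemLp (fun zs : Fin n → 𝒵 => ∑ j ∈ A, u (zs j)) 2 (Measure.pi fun _ => μ) :=
    memLp_finsetSum A (fun j _ => hm j)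
  refine ⟨hS.integrable_sq, ?_⟩
  have hz : ∀ j : Fin n, ∫ zs : Fin n → 𝒵, u (zs j) ∂(Measure.pi fun _ => μ) = 0 := by
    intro j
    rw [integral_comp_eval (μ := fun _ : Fin n => μ) hu.aestronglyMeasurable, hu0]
  have hv := IndepFun.variance_sum (μ := Measure.pi fun _ : Fin n => μ)
    (X := fun (i : Fin n) (ω : Fin n → 𝒵) => u (ω i)) (s := A) (fun j _ => hm j)
    (fun i _ j _ hij => hind.indepFun hij)
  have e1 : (∑ i ∈ A, fun (ω : Fin n → 𝒵) => u (ω i)) = fun zs => ∑ j ∈ A, u (zs j) := by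
    ext; simp
  rw [e1, variance_of_integral_eq_zero hS.aemeasurable] at hv
  · rw [hv]
    have : ∀ i ∈ A, Var[fun ω : Fin n → 𝒵 => u (ω i); Measure.pi fun _ => μ]
        = ∫ z, u z ^ 2 ∂μ := by
      intro i _
      rw [variance_of_integral_eq_zero (hm i).aemeasurable (hz i)]
      exact integral_comp_eval (μ := fun _ : Fin n => μ) (i := i) (f := fun z => u z ^ 2)
        (hu.pow_const 2).aestronglyMeasurable
    rw [Finset.sum_congr rfl this]; simp
  · rw [integral_finsetSum _ (fun j _ => (hm j).integrable (by norm_num))]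
    simp [hz]

lemma ebd_cross {𝒵 : Type*} [MeasurableSpace 𝒵] (μ : Measure 𝒵) [IsProbabilityMeasure μ]
    (u : 𝒵 → ℝ) (hu : Measurable u) (hu2 : MemLp u 2 μ) (hu0 : ∫ z, u z ∂μ = 0)
    (g : 𝒵 → ℝ) (hg : Measurable g) (hgi : Integrable g μ)
    (n : ℕ) (k : Fin n) :
    Integrable (fun zs : Fin n → 𝒵 => g (zs k) * (∑ j ∈ univ.erase k, u (zs j)) ^ 2)
      (Measure.pi fun _ => μ) ∧
    ∫ zs, g (zs k) * (∑ j ∈ univ.erase k, u (zs j)) ^ 2 ∂(Measure.pi fun _ : Fin n => μ)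
      = (∫ z, g z ∂μ) * ((n - 1 : ℕ) * ∫ z, u z ^ 2 ∂μ) := by
  obtain ⟨hi, hv⟩ := ebd_sumsq μ u hu hu2 hu0 n (univ.erase k)
  have hind : iIndepFun (fun (i : Fin n) (ω : Fin n → 𝒵) => ω i) (Measure.pi fun _ => μ) :=
    iIndepFun_pi (X := fun _ z => z) (fun _ => aemeasurable_id)
  have h2 := hind.indepFun_finset {k} (univ.erase k) (by simp) (fun i => measurable_pi_apply i)
  have h3 : (fun zs : Fin n → 𝒵 => g (zs k)) ⟂ᵢ[Measure.pi fun _ => μ]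
      (fun zs : Fin n → 𝒵 => (∑ j ∈ univ.erase k, u (zs j)) ^ 2) := by
    have := h2.comp
      (φ := fun z : ({k} : Finset (Fin n)) → 𝒵 => g (z ⟨k, Finset.mem_singleton_self k⟩))
      (ψ := fun z : ((univ : Finset (Fin n)).erase k) → 𝒵 =>
        (∑ j : ((univ : Finset (Fin n)).erase k), u (z j)) ^ 2)
      (hg.comp (measurable_pi_apply _)) (by fun_prop)
    have e : (fun zs : Fin n → 𝒵 => (∑ j ∈ univ.erase k, u (zs j)) ^ 2)
        = fun zs => (∑ j : ((univ : Finset (Fin n)).erase k), u (zs j)) ^ 2 := by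
      funext zs
      rw [Finset.sum_coe_sort (univ.erase k) (fun j => u (zs j))]
    rw [e]
    exact this
  have hgk : Integrable (fun zs : Fin n → 𝒵 => g (zs k)) (Measure.pi fun _ => μ) :=
    integrable_comp_eval (μ := fun _ : Fin n => μ) hgi
  refine ⟨h3.integrable_mul hgk hi, ?_⟩
  have := h3.integral_mul_eq_mul_integral hgk.aestronglyMeasurable hi.aestronglyMeasurable
  simp only [Pi.mul_apply] at this
  rw [this, hv, integral_comp_eval (μ := fun _ : Fin n => μ) hg.aestronglyMeasurable]
  simp

lemma ebd_fixed {𝒵 : Type*} [MeasurableSpace 𝒵] (μ : Measure 𝒵) [IsProbabilityMeasure μ]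
    (f : 𝒵 → ℝ) (hf : Measurable f) (hpos : ∀ z, 0 < f z) (hf1 : ∫ z, f z ∂μ = 1)
    (s t : ℝ) (hs : 2 < s) (ht : 2 < t) (hst : 4 ≤ (s - 2) * (t - 2))
    (hfs : Integrable (fun z => f z ^ s) μ)
    (hft : Integrable (fun z => |Real.log (f z)| ^ t) μ) (n : ℕ) (hn : 0 < n) :
    |∫ zs : Fin n → 𝒵, Real.log ((∑ k, f (zs k)) / n) ∂(Measure.pi fun _ => μ)|
      ≤ 22 * (1 + (∫ z, |Real.log (f z)| ^ t ∂μ) + ∫ z, f z ^ s ∂μ) / n := by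
  have hn0 : (0 : ℝ) < n := by exact_mod_cast hn
  have hfi : Integrable f μ := by
    by_contra h
    rw [integral_undef h] at hf1; norm_num at hf1
  set T := ∫ z, |Real.log (f z)| ^ t ∂μ with hT
  set S := ∫ z, f z ^ s ∂μ with hS
  have hT0 : 0 ≤ T := integral_nonneg fun z => by positivity
  have hS0 : 0 ≤ S := integral_nonneg fun z => Real.rpow_nonneg (hpos z).le s
  have hR0 : 0 ≤ 22 * (1 + T + S) / n := by positivity
  have hlm : Measurable (fun z => |Real.log (f z)|) := by fun_prop
  -- moments
  have hgi : Integrable (fun z => |Real.log (f z)|) μ := by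
    refine ((integrable_const (1 : ℝ)).add hft).mono' hlm.aestronglyMeasurable ?_
    refine Filter.Eventually.of_forall fun z => ?_
    have := ebd_le_one_add_rpow |Real.log (f z)| t 1 (abs_nonneg _) (by norm_num) (by linarith)
    simpa using this
  have hf2i : Integrable (fun z => f z ^ 2) μ := by
    refine ((integrable_const (1 : ℝ)).add hfs).mono' (hf.pow_const 2).aestronglyMeasurable ?_
    refine Filter.Eventually.of_forall fun z => ?_
    have := ebd_le_one_add_rpow (f z) s 2 (hpos z).le (by norm_num) hs.le
    simpa using this
  have hfm : MemLp f 2 μ := (memLp_two_iff_integrable_sq hf.aestronglyMeasurable).2 hf2i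
  set L := ∫ z, |Real.log (f z)| ∂μ with hL
  set m := ∫ z, f z ^ 2 ∂μ with hm
  have hL0 : 0 ≤ L := integral_nonneg fun z => abs_nonneg _
  have hL1 : L ≤ 1 + T := by
    have : L ≤ ∫ z, (1 + |Real.log (f z)| ^ t) ∂μ := by
      refine integral_mono hgi ((integrable_const (1 : ℝ)).add hft) fun z => ?_
      have := ebd_le_one_add_rpow |Real.log (f z)| t 1 (abs_nonneg _) (by norm_num) (by linarith)
      simpa using this
    rw [integral_add (integrable_const _) hft] at this
    simpa using this
  have hm1 : m ≤ 1 + S := by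
    have : m ≤ ∫ z, (1 + f z ^ s) ∂μ := by
      refine integral_mono hf2i ((integrable_const (1 : ℝ)).add hfs) fun z => ?_
      have := ebd_le_one_add_rpow (f z) s 2 (hpos z).le (by norm_num) hs.le
      simpa using this
    rw [integral_add (integrable_const _) hfs] at this
    simpa using this
  have hLm : L * m ≤ 1 + T + S := by
    have h1 : Integrable (fun p : 𝒵 × 𝒵 => |Real.log (f p.1)| ^ t) (μ.prod μ) := hft.comp_fst μ
    have h2 : Integrable (fun p : 𝒵 × 𝒵 => f p.2 ^ s) (μ.prod μ) := hfs.comp_snd μ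
    rw [hL, hm, ← integral_prod_mul]
    calc ∫ p : 𝒵 × 𝒵, |Real.log (f p.1)| * f p.2 ^ 2 ∂(μ.prod μ)
        ≤ ∫ p : 𝒵 × 𝒵, (1 + |Real.log (f p.1)| ^ t + f p.2 ^ s) ∂(μ.prod μ) := by
          refine integral_mono (hgi.mul_prod hf2i) (((integrable_const (1 : ℝ)).add h1).add h2)
            fun p => ?_
          exact ebd_young _ _ s t (abs_nonneg _) (hpos _).le hs ht hst
      _ = 1 + T + S := by
          have h3 : Integrable (fun p : 𝒵 × 𝒵 => 1 + |Real.log (f p.1)| ^ t) (μ.prod μ) :=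
            (integrable_const (1 : ℝ)).add h1
          rw [integral_add h3 h2,
            integral_add (integrable_const (1 : ℝ)) h1,
            integral_fun_fst (fun z => |Real.log (f z)| ^ t), integral_fun_snd (fun z => f z ^ s)]
          simp [hT, hS]
  -- centered weight
  set u : 𝒵 → ℝ := fun z => f z - 1 with hu
  have hum : Measurable u := hf.sub_const 1
  have hu2 : MemLp u 2 μ := hfm.sub (memLp_const 1)
  have hu0 : ∫ z, u z ∂μ = 0 := by
    rw [hu, integral_sub hfi (integrable_const _), hf1]; simp
  set v := ∫ z, u z ^ 2 ∂μ with hv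
  have hv0 : 0 ≤ v := integral_nonneg fun z => sq_nonneg _
  have hvm : v ≤ m := by
    have : v = ∫ z, (f z ^ 2 - (2 * f z - 1)) ∂μ := by
      rw [hv]; congr 1; ext z; rw [hu]; ring
    have h3 : Integrable (fun z => 2 * f z - 1) μ := (hfi.const_mul 2).sub (integrable_const 1)
    rw [this, integral_sub hf2i h3,
      integral_sub (hfi.const_mul 2) (integrable_const 1), integral_const_mul, hf1]
    simp; linarith
  by_cases hint : Integrable (fun zs : Fin n → 𝒵 => Real.log ((∑ k, f (zs k)) / n))
      (Measure.pi fun _ => μ)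
  swap
  · rw [integral_undef hint]; simpa using hR0
  have hev : ∀ k : Fin n, Integrable (fun zs : Fin n → 𝒵 => f (zs k)) (Measure.pi fun _ => μ) :=
    fun k => integrable_comp_eval (μ := fun _ : Fin n => μ) hfi
  have hYi : Integrable (fun zs : Fin n → 𝒵 => (∑ k, f (zs k)) / n) (Measure.pi fun _ => μ) :=
    (integrable_finsetSum _ fun k _ => hev k).div_const _
  have hY1 : ∫ zs : Fin n → 𝒵, (∑ k, f (zs k)) / n ∂(Measure.pi fun _ => μ) = 1 := by
    rw [integral_div, integral_finsetSum _ (fun k _ => hev k)]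
    have : ∀ k : Fin n, ∫ zs : Fin n → 𝒵, f (zs k) ∂(Measure.pi fun _ => μ) = 1 := fun k => by
      rw [integral_comp_eval (μ := fun _ : Fin n => μ) hf.aestronglyMeasurable, hf1]
    simp [this, hn0.ne']
  have : Nonempty (Fin n) := ⟨⟨0, hn⟩⟩
  rw [abs_le]
  constructor
  · obtain ⟨hq1, hq2⟩ := ebd_sumsq μ u hum hu2 hu0 n univ
    have hc := fun k => ebd_cross μ u hum hu2 hu0 (fun z => |Real.log (f z)|) hlm hgi n k
    have hgk : ∀ k : Fin n, Integrable (fun zs : Fin n → 𝒵 => |Real.log (f (zs k))|)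
        (Measure.pi fun _ => μ) :=
      fun k => integrable_comp_eval (μ := fun _ : Fin n => μ) (i := k) hgi
    have hgk1 : ∀ k : Fin n, ∫ zs : Fin n → 𝒵, |Real.log (f (zs k))| ∂(Measure.pi fun _ => μ) = L :=
      fun k => integral_comp_eval (μ := fun _ : Fin n => μ) (i := k) hlm.aestronglyMeasurable
    have i1 : Integrable (fun zs : Fin n → 𝒵 => 1 - (∑ k, f (zs k)) / n)
      (Measure.pi fun _ => μ) := (integrable_const _).sub hYi
    have i2 : Integrable (fun zs : Fin n → 𝒵 => 2 / (n : ℝ) ^ 2 * (∑ j, u (zs j)) ^ 2)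
      (Measure.pi fun _ => μ) := hq1.const_mul _
    have i3 : ∀ k : Fin n, Integrable (fun zs : Fin n → 𝒵 => 4 / (n : ℝ) * |Real.log (f (zs k))|)
      (Measure.pi fun _ => μ) := fun k => (hgk k).const_mul _
    have i4 : ∀ k : Fin n, Integrable (fun zs : Fin n → 𝒵 => 16 / (n : ℝ) ^ 2 *
        (|Real.log (f (zs k))| * (∑ j ∈ univ.erase k, u (zs j)) ^ 2))
      (Measure.pi fun _ => μ) := fun k => (hc k).1.const_mul _
    have i5 : ∀ k : Fin n, Integrable (fun zs : Fin n → 𝒵 => 1 / (n : ℝ) *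
        (4 / (n : ℝ) * |Real.log (f (zs k))| + 16 / (n : ℝ) ^ 2 *
        (|Real.log (f (zs k))| * (∑ j ∈ univ.erase k, u (zs j)) ^ 2)))
      (Measure.pi fun _ => μ) := fun k => ((i3 k).add (i4 k)).const_mul _
    have hmono := integral_mono hint.neg ((i1.add i2).add (integrable_finsetSum univ
      fun k _ => i5 k)) (fun zs => ebd_pointwise n hn (fun k => f (zs k)) (fun k => hpos _))
    have e : ∫ zs : Fin n → 𝒵, ((1 - (∑ k, f (zs k)) / n) + 2 / (n : ℝ) ^ 2 * (∑ j, u (zs j)) ^ 2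
        + ∑ k, 1 / (n : ℝ) *
        (4 / (n : ℝ) * |Real.log (f (zs k))| + 16 / (n : ℝ) ^ 2 *
        (|Real.log (f (zs k))| * (∑ j ∈ univ.erase k, u (zs j)) ^ 2))) ∂(Measure.pi fun _ => μ)
        = 2 / (n : ℝ) * v + (4 / n * L + 16 / (n : ℝ) ^ 2 * (L * ((n - 1 : ℕ) * v))) := by
      have i12 : Integrable (fun zs : Fin n → 𝒵 => (1 - (∑ k, f (zs k)) / n)
        + 2 / (n : ℝ) ^ 2 * (∑ j, u (zs j)) ^ 2) (Measure.pi fun _ => μ) := i1.add i2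
      rw [integral_add i12 (integrable_finsetSum univ fun k _ => i5 k),
        integral_add i1 i2, integral_sub (integrable_const _) hYi, hY1, integral_const_mul, hq2, ← hv,
        integral_finsetSum _ (fun k _ => i5 k)]
      have : ∀ k : Fin n, ∫ zs : Fin n → 𝒵, 1 / (n : ℝ) *
        (4 / (n : ℝ) * |Real.log (f (zs k))| + 16 / (n : ℝ) ^ 2 *
        (|Real.log (f (zs k))| * (∑ j ∈ univ.erase k, u (zs j)) ^ 2)) ∂(Measure.pi fun _ => μ)
          = 1 / (n : ℝ) * (4 / n * L + 16 / (n : ℝ) ^ 2 * (L * ((n - 1 : ℕ) * v))) := fun k => by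
        rw [integral_const_mul, integral_add (i3 k) (i4 k), integral_const_mul,
          integral_const_mul, hgk1 k, (hc k).2]
      rw [Finset.sum_congr rfl fun k _ => this k]
      simp
      field_simp
    have hneg : ∫ zs : Fin n → 𝒵, -Real.log ((∑ k, f (zs k)) / n) ∂(Measure.pi fun _ => μ)
        ≤ 2 / (n : ℝ) * v + (4 / n * L + 16 / (n : ℝ) ^ 2 * (L * ((n - 1 : ℕ) * v))) := by
      rw [← e]; exact hmono
    rw [integral_neg] at hneg
    have hn1 : ((n - 1 : ℕ) : ℝ) ≤ n := by exact_mod_cast Nat.sub_le n 1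
    have hb : 2 / (n : ℝ) * v + (4 / n * L + 16 / (n : ℝ) ^ 2 * (L * ((n - 1 : ℕ) * v)))
        ≤ 22 * (1 + T + S) / n := by
      calc _ ≤ 2 / (n : ℝ) * m + (4 / n * L + 16 / (n : ℝ) ^ 2 * (L * (n * m))) := by gcongr
        _ = (2 * m + 4 * L + 16 * (L * m)) / n := by field_simp; ring
        _ ≤ _ := by
          gcongr
          linarith
    linarith
  · have := integral_mono hint (hYi.sub (integrable_const 1)) (fun zs =>
      Real.log_le_sub_one_of_pos (div_pos (Finset.sum_pos (fun k _ => hpos (zs k)) univ_nonempty)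
        hn0))
    have e : ∫ zs : Fin n → 𝒵, ((∑ k, f (zs k)) / n - 1) ∂(Measure.pi fun _ => μ) = 0 := by
      rw [integral_sub hYi (integrable_const 1), hY1]; simp
    have h2 : ∫ zs : Fin n → 𝒵, Real.log ((∑ k, f (zs k)) / n) ∂(Measure.pi fun _ => μ) ≤ 0 := by
      rw [← e]; exact this
    linarith

/-- **Bias decay of the importance-sampling evidence estimator** (Theorem 2 of the paper).
Let `X ~ ν` and, conditionally on `X`, let `Z₁, Z₂, …` be i.i.d. with law `q(·; X)`; let
`w > 0` be the normalized importance weight, `∫ w(x,z) q(dz;x) = 1` for a.e. `x`, and let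
`Ȳ_K = (1/K)∑_{k=1}^K w(X, Z_k)`.  If `E[w^s] < ∞` and `E[|log w|^t] < ∞` for some
`s, t > 2` with `(s−2)(t−2) ≥ 4`, then the bias of the level-`2^ℓ` estimator satisfies
`|E[log Ȳ_{2^ℓ}]| ≤ c·2^{−αℓ}` with `α = min(s(t−1)/(2t), 1)` (by normalization of the
weights, `E[log Ȳ_K]` is exactly the difference between the expected level-`K` estimator
and the true model evidence). -/
theorem evidence_bias_decay
    {𝒳 𝒵 : Type*} [MeasurableSpace 𝒳] [MeasurableSpace 𝒵]
    (ν : Measure 𝒳) [IsProbabilityMeasure ν]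
    (q : Kernel 𝒳 𝒵) [IsMarkovKernel q]
    (w : 𝒳 → 𝒵 → ℝ) (hw_meas : Measurable (Function.uncurry w))
    (hw_pos : ∀ x z, 0 < w x z)
    (hw_norm : ∀ᵐ x ∂ν, ∫ z, w x z ∂(q x) = 1)
    (s t : ℝ) (hs : 2 < s) (ht : 2 < t) (hst : 4 ≤ (s - 2) * (t - 2))
    (hws : Integrable (fun p : 𝒳 × 𝒵 => w p.1 p.2 ^ s) (ν ⊗ₘ q))
    (hwt : Integrable (fun p : 𝒳 × 𝒵 => |Real.log (w p.1 p.2)| ^ t) (ν ⊗ₘ q)) :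
    ∃ c > (0 : ℝ), ∀ ℓ : ℕ,
      |jointExp ν q (2 ^ ℓ) (fun x zs => Real.log ((∑ k, w x (zs k)) / 2 ^ ℓ))|
        ≤ c * (2 : ℝ) ^ (-(min (s * (t - 1) / (2 * t)) 1) * ℓ) := by
  have hs0 : 0 < s := by linarith
  have ht0 : 0 < t := by linarith
  have hα : min (s * (t - 1) / (2 * t)) 1 = 1 := by
    apply min_eq_right
    rw [le_div_iff₀ (by positivity)]
    nlinarith
  rw [hα]
  obtain ⟨hs1, hs2⟩ := (Measure.integrable_compProd_iff hws.aestronglyMeasurable).1 hws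
  obtain ⟨ht1, ht2⟩ := (Measure.integrable_compProd_iff hwt.aestronglyMeasurable).1 hwt
  have eS : ∀ x z, ‖w x z ^ s‖ = w x z ^ s := fun x z => by
    rw [Real.norm_of_nonneg (Real.rpow_nonneg (hw_pos x z).le s)]
  have eT : ∀ x z, ‖|Real.log (w x z)| ^ t‖ = |Real.log (w x z)| ^ t := fun x z => by
    rw [Real.norm_of_nonneg (Real.rpow_nonneg (abs_nonneg _) t)]
  simp only [eS] at hs2
  simp only [eT] at ht2
  set B : 𝒳 → ℝ := fun x => 1 + (∫ z, |Real.log (w x z)| ^ t ∂(q x)) + ∫ z, w x z ^ s ∂(q x)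
    with hB
  have hBi : Integrable B ν := ((integrable_const (1 : ℝ)).add ht2).add hs2
  have hB1 : ∀ x, 1 ≤ B x := fun x => by
    have h1 : 0 ≤ ∫ z, |Real.log (w x z)| ^ t ∂(q x) := integral_nonneg fun z => by positivity
    have h2 : 0 ≤ ∫ z, w x z ^ s ∂(q x) :=
      integral_nonneg fun z => Real.rpow_nonneg (hw_pos x z).le s
    simp only [hB]; linarith
  have hBint : 1 ≤ ∫ x, B x ∂ν := by
    have := integral_mono (integrable_const (1 : ℝ)) hBi hB1
    simpa using this
  refine ⟨22 * ∫ x, B x ∂ν, by linarith, fun ℓ => ?_⟩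
  have hae : ∀ᵐ x ∂ν, ‖∫ zs : Fin (2 ^ ℓ) → 𝒵, Real.log ((∑ k, w x (zs k)) / 2 ^ ℓ)
      ∂(Measure.pi fun _ => q x)‖ ≤ 22 / 2 ^ ℓ * B x := by
    filter_upwards [hw_norm, hs1, ht1] with x h1 h2 h3
    have := ebd_fixed (q x) (w x) (hw_meas.comp measurable_prodMk_left) (hw_pos x) h1 s t hs ht hst
      h2 h3 (2 ^ ℓ) (by positivity)
    push_cast at this
    rw [Real.norm_eq_abs]
    refine this.trans (le_of_eq ?_)
    rw [hB]; ring
  have hfin := norm_integral_le_of_norm_le (hBi.const_mul (22 / 2 ^ ℓ)) hae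
  rw [integral_const_mul, Real.norm_eq_abs] at hfin
  refine hfin.trans (le_of_eq ?_)
  rw [neg_one_mul, Real.rpow_neg (by norm_num), Real.rpow_natCast]
  ring
end
end

section
/- Suppose there exist real numbers s, t > 2 with (s−2)(t−2) ≥ 4 such that E[w(Θ, X, Z_1)^s] < ∞ and E[|log w(Θ, X, Z_1)|^t] < ∞. Then there exists a constant c > 0 such that for every ℓ ≥ 1, Var[Δ_ℓ] ≤ c·2^{−βℓ} with β = min(s(t−2)/(2t), 2), and for every ℓ ≥ 0 the bias satisfies |E[log Ȳ_{2^ℓ}]| ≤ c·2^{−αℓ} with α = min(s(t−1)/(2t), 1). (These are the MLMC rate constants for estimating the locally marginalized evidence lower bound, whose estimator differs from log Ȳ_K only by a term not depending on the inner samples.) -/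
open MeasureTheory ProbabilityTheory Finset
open scoped ENNReal

noncomputable section

/-- Expectation of a functional `f` of a global parameter `θ ~ r`, a data point `x ~ ν`
(independent of `θ`), and `n` samples drawn i.i.d. (conditionally on `x`) from the
proposal kernel `q`. -/
def jointExp3 {Θ 𝒳 𝒵 : Type*} [MeasurableSpace Θ] [MeasurableSpace 𝒳] [MeasurableSpace 𝒵]
    (r : Measure Θ) (ν : Measure 𝒳) (q : Kernel 𝒳 𝒵) (n : ℕ)
    (f : Θ → 𝒳 → (Fin n → 𝒵) → ℝ) : ℝ :=
  ∫ θ, ∫ x, ∫ zs, f θ x zs ∂(Measure.pi fun _ : Fin n => q x) ∂ν ∂r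

/-- The coupled level correction `Δ = log Ȳ_{2n} − ½(log Ȳₙ⁽ᵃ⁾ + log Ȳₙ⁽ᵇ⁾)` for the
locally marginalized evidence lower bound, where the averages `Ȳ` of the weights
`w θ x ·` are over all `2n` samples, the first `n`, and the last `n` respectively. -/
def mlmcCorrection3 {Θ 𝒳 𝒵 : Type*} (w : Θ → 𝒳 → 𝒵 → ℝ) (n : ℕ) (θ : Θ) (x : 𝒳)
    (zs : Fin (2 * n) → 𝒵) : ℝ :=
  Real.log ((∑ k, w θ x (zs k)) / (2 * n))
    - (Real.log ((∑ k : Fin n, w θ x (zs ⟨k.1, by have := k.2; omega⟩)) / n)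
        + Real.log ((∑ k : Fin n, w θ x (zs ⟨n + k.1, by have := k.2; omega⟩)) / n)) / 2

lemma aux_pow_le_one_add {x a m : ℝ} (hx : 0 ≤ x) (ha : 0 ≤ a) (ham : a ≤ m) :
    x ^ a ≤ 1 + x ^ m := by
  rcases le_total x 1 with h | h
  · have := Real.rpow_le_one hx h ha
    have := Real.rpow_nonneg hx m
    linarith
  · have := Real.rpow_le_rpow_of_exponent_le h ham
    linarith

lemma aux_taylor {m : ℝ} (hm : 2 ≤ m) (x y : ℝ) :
    |x + y| ^ m ≤ |x| ^ m + m * ((|x| ^ m / x) * y)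
      + ((m + 1) ^ m + m ^ m + m ^ 2) * (|x| ^ (m - 2) * y ^ 2 + |y| ^ m) := by
  have hm0 : 0 < m := by linarith
  have hA : 0 ≤ (m + 1) ^ m := by positivity
  have hB : 0 ≤ m ^ m := by positivity
  have hY : 0 ≤ |y| ^ m := by positivity
  have hX : 0 ≤ |x| ^ m := by positivity
  have hXY : 0 ≤ |x| ^ (m - 2) * y ^ 2 := by positivity
  rcases le_or_gt |x| (m * |y|) with h | h
  · have h1 : |x + y| ^ m ≤ (m + 1) ^ m * |y| ^ m := by
      rw [← Real.mul_rpow (by positivity) (by positivity)]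
      apply Real.rpow_le_rpow (by positivity) _ hm0.le
      have := abs_add_le x y
      linarith
    have h2 : |m * ((|x| ^ m / x) * y)| ≤ m ^ m * |y| ^ m := by
      rcases eq_or_ne x 0 with rfl | hx
      · simp; positivity
      · have hy : y ≠ 0 := by
          rintro rfl
          simp at h
          exact hx h
        have hx' : |x| ≠ 0 := by positivity
        have hy' : |y| ≠ 0 := by positivity
        rw [abs_mul, abs_mul, abs_div, abs_of_nonneg hX, abs_of_nonneg hm0.le,
          ← Real.rpow_sub_one hx']
        have h3 : |x| ^ (m - 1) ≤ (m * |y|) ^ (m - 1) :=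
          Real.rpow_le_rpow (by positivity) h (by linarith)
        have h4 : m ^ m * |y| ^ m = m * ((m * |y|) ^ (m - 1) * |y|) := by
          rw [Real.mul_rpow (by positivity) (by positivity), Real.rpow_sub_one hm0.ne',
            Real.rpow_sub_one hy']
          field_simp
        rw [h4]
        gcongr
    have h5 := neg_abs_le (m * ((|x| ^ m / x) * y))
    nlinarith [mul_nonneg hA hXY, mul_nonneg hB hXY, mul_nonneg (sq_nonneg m) hXY, mul_nonneg (sq_nonneg m) hY]
  · have hxp : 0 < |x| := lt_of_le_of_lt (by positivity) h
    have hx : x ≠ 0 := abs_pos.mp hxp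
    set u := y / x with hu
    have hyu : y = x * u := by rw [hu]; field_simp
    have hmu : |m * u| ≤ 1 := by
      rw [hu, abs_mul, abs_div, abs_of_nonneg hm0.le, ← mul_div_assoc, div_le_one hxp]
      exact h.le
    have hu1 : |u| ≤ 1 := by
      rw [abs_mul, abs_of_nonneg hm0.le] at hmu
      nlinarith [abs_nonneg u]
    have hu0 : 0 ≤ 1 + u := by linarith [neg_abs_le u]
    have h1 : (1 + u) ^ m ≤ 1 + m * u + m ^ 2 * u ^ 2 := by
      have e1 : (1 + u) ^ m ≤ Real.exp (m * u) := by
        rw [mul_comm, Real.exp_mul]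
        exact Real.rpow_le_rpow hu0 (by linarith [Real.add_one_le_exp u]) hm0.le
      have e2 := (abs_le.mp (Real.abs_exp_sub_one_sub_id_le hmu)).2
      nlinarith
    have h2 : |x + y| ^ m = |x| ^ m * (1 + u) ^ m := by
      rw [hyu, show x + x * u = x * (1 + u) by ring, abs_mul, abs_of_nonneg hu0,
        Real.mul_rpow (by positivity) hu0]
    have h3 : m * ((|x| ^ m / x) * y) = |x| ^ m * (m * u) := by
      rw [hyu]; field_simp
    have h4 : |x| ^ (m - 2) * y ^ 2 = |x| ^ m * u ^ 2 := by
      have : |x| ^ m = |x| ^ (m - 2) * x ^ 2 := by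
        rw [← sq_abs x, ← Real.rpow_natCast, ← Real.rpow_add hxp]; norm_num
      rw [this, hyu]; ring
    have h5 := mul_le_mul_of_nonneg_left h1 hX
    rw [h2, h3]
    have h6 : m ^ 2 * (|x| ^ (m - 2) * y ^ 2) = |x| ^ m * (m ^ 2 * u ^ 2) := by rw [h4]; ring
    nlinarith [mul_nonneg hA hXY, mul_nonneg hB hXY, mul_nonneg hA hY, mul_nonneg hB hY, mul_nonneg (sq_nonneg m) hY]

lemma aux_jensen {Ω : Type*} [MeasurableSpace Ω] {P : Measure Ω} [IsProbabilityMeasure P]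
    {X : Ω → ℝ} (hXm : Measurable X) {a m : ℝ} (ha : 0 ≤ a) (ham : a ≤ m) (hm : 0 < m)
    (hX : Integrable (fun ω => |X ω| ^ m) P) :
    Integrable (fun ω => |X ω| ^ a) P ∧
      ∫ ω, |X ω| ^ a ∂P ≤ (∫ ω, |X ω| ^ m ∂P) ^ (a / m) := by
  have h1 : Integrable (fun ω => |X ω| ^ a) P := by
    refine Integrable.mono' ((integrable_const (1:ℝ)).add hX) ?_ ?_
    · exact (by fun_prop : Measurable fun ω => |X ω| ^ a).aestronglyMeasurable
    · refine Filter.Eventually.of_forall fun ω => ?_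
      rw [Real.norm_eq_abs, abs_of_nonneg (by positivity)]
      exact aux_pow_le_one_add (abs_nonneg _) ha ham
  refine ⟨h1, ?_⟩
  have e : ∀ ω, |X ω| ^ a = (|X ω| ^ m) ^ (a / m) := fun ω => by
    rw [← Real.rpow_mul (abs_nonneg _)]; congr 1; field_simp
  have hc := (Real.concaveOn_rpow (p := a / m) (by positivity) ((div_le_one hm).2 ham))
  have := hc.le_map_integral (μ := P) (f := fun ω => |X ω| ^ m)
    (Real.continuous_rpow_const (by positivity)).continuousOn isClosed_Ici
    (Filter.Eventually.of_forall fun ω => by simp; positivity) hX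
    (by refine h1.congr (Filter.Eventually.of_forall fun ω => e ω))
  simp_rw [e]
  exact this

lemma aux_num {x C K p : ℝ} (hx : 0 ≤ x) (hC : 0 ≤ C) (hK : 2 * C + 1 ≤ K) (hp : 1 ≤ p) :
    x ^ p + C * (x ^ (p - 1) + 1) ≤ (x + K) ^ p := by
  have e : ∀ z : ℝ, 0 ≤ z → z ^ p = z * z ^ (p - 1) := fun z hz => by
    rw [← Real.rpow_one_add' hz (by linarith)]; congr 1; ring
  have h1 : x ^ (p - 1) ≤ (x + K) ^ (p - 1) :=
    Real.rpow_le_rpow hx (by linarith) (by linarith)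
  have h2 : 1 ≤ (x + K) ^ (p - 1) := Real.one_le_rpow (by linarith) (by linarith)
  rw [e x hx, e (x + K) (by linarith)]
  nlinarith [mul_le_mul_of_nonneg_left h1 hx, mul_le_mul_of_nonneg_left h1 hC, mul_le_mul_of_nonneg_left h2 hC, mul_le_mul_of_nonneg_right hK (by linarith : 0 ≤ (x+K)^(p-1))]

lemma aux_mz {ι Z : Type*} [Fintype ι] [DecidableEq ι] [MeasurableSpace Z] (μ : Measure Z)
    [IsProbabilityMeasure μ] {f : Z → ℝ} (hf : Measurable f) {m : ℝ} (hm : 2 ≤ m)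
    (h0 : ∫ z, f z ∂μ = 0) (hfm : Integrable (fun z => |f z| ^ m) μ) {K : ℝ}
    (hK : 2 * ((m + 1) ^ m + m ^ m + m ^ 2) + 1 ≤ K) (S : Finset ι) :
    Integrable (fun zs : ι → Z => |∑ k ∈ S, f (zs k)| ^ m) (Measure.pi fun _ : ι => μ) ∧
      ∫ zs, |∑ k ∈ S, f (zs k)| ^ m ∂(Measure.pi fun _ : ι => μ)
        ≤ (K * #S) ^ (m / 2) * ∫ z, |f z| ^ m ∂μ := by
  have hm0 : 0 < m := by linarith
  set C := (m + 1) ^ m + m ^ m + m ^ 2 with hC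
  have hC0 : 0 ≤ C := by positivity
  set P := Measure.pi fun _ : ι => μ with hP
  set b := ∫ z, |f z| ^ m ∂μ with hb
  have hb0 : 0 ≤ b := integral_nonneg fun z => by positivity
  have hind : iIndepFun (fun (i : ι) (zs : ι → Z) => f (zs i)) P :=
    iIndepFun_pi (X := fun _ : ι => f) fun i => hf.aemeasurable
  induction S using Finset.induction_on with
  | empty =>
    simp [Real.zero_rpow hm0.ne', Real.zero_rpow (show m / 2 ≠ 0 by positivity)]
  | insert j S hj ih =>
    obtain ⟨ihi, ihb⟩ := ih
    set X : (ι → Z) → ℝ := fun zs => ∑ k ∈ S, f (zs k) with hX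
    have ihi : Integrable (fun zs => |X zs| ^ m) P := ihi
    set Y : (ι → Z) → ℝ := fun zs => f (zs j) with hYdef
    have hXm : Measurable X := by fun_prop
    have hYm : Measurable Y := by fun_prop
    have hXY : IndepFun X Y P := by
      have := hind.indepFun_finsetSum_of_notMem (fun i => by fun_prop) hj
      convert this using 1
      ext zs; simp [hX]
    have hev := measurePreserving_eval (fun _ : ι => μ) j
    have hYint : Integrable (fun zs => |Y zs| ^ m) P :=
      hev.integrable_comp_of_integrable hfm
    have hYb : ∫ zs, |Y zs| ^ m ∂P = b := by
      rw [hb, ← hev.map_eq, integral_map (measurable_pi_apply j).aemeasurable]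
      exact (by fun_prop : Measurable fun z => |f z| ^ m).aestronglyMeasurable
    have hY0 : ∫ zs, Y zs ∂P = 0 := by
      rw [← h0]
      conv_rhs => rw [← hev.map_eq]
      rw [integral_map (measurable_pi_apply j).aemeasurable hf.aestronglyMeasurable]
    obtain ⟨hX2i, hX2⟩ := aux_jensen (P := P) hXm (a := m - 2) (by linarith) (by linarith) hm0 ihi
    obtain ⟨hY2i, hY2⟩ := aux_jensen (P := P) hYm (a := 2) (by linarith) hm hm0 hYint
    obtain ⟨hY1i, -⟩ := aux_jensen (P := P) hYm (a := 1) (by linarith) (by linarith) hm0 hYint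
    have hY1i : Integrable Y P := by
      refine Integrable.mono' hY1i hYm.aestronglyMeasurable ?_
      exact Filter.Eventually.of_forall fun ω => by simp
    simp only [Real.rpow_two, sq_abs] at hY2i hY2
    set H : ℝ → ℝ := fun x => |x| ^ m / x with hH
    have hHm : Measurable H := by fun_prop
    have hHi : Integrable (fun zs => H (X zs)) P := by
      obtain ⟨h, -⟩ := aux_jensen (P := P) hXm (a := m - 1) (by linarith) (by linarith) hm0 ihi
      refine Integrable.mono' h (hHm.comp hXm).aestronglyMeasurable ?_
      refine Filter.Eventually.of_forall fun ω => ?_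
      simp only [hH, Real.norm_eq_abs, abs_div]
      rw [abs_of_nonneg (by positivity)]
      rcases eq_or_ne (X ω) 0 with h | h
      · rw [h]; simp; positivity
      · rw [Real.rpow_sub_one (by positivity)]
    have hind1 : IndepFun (fun zs => H (X zs)) Y P := hXY.comp hHm measurable_id
    have hind2 : IndepFun (fun zs => |X zs| ^ (m - 2)) (fun zs => Y zs ^ 2) P :=
      hXY.comp (φ := fun x => |x| ^ (m - 2)) (ψ := fun y => y ^ 2) (by fun_prop) (by fun_prop)
    have i1 : Integrable (fun zs => H (X zs) * Y zs) P := hind1.integrable_mul hHi hY1i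
    have i2 : Integrable (fun zs => |X zs| ^ (m - 2) * Y zs ^ 2) P :=
      hind2.integrable_mul hX2i hY2i
    have e1 : ∫ zs, H (X zs) * Y zs ∂P = 0 := by
      rw [hind1.integral_fun_mul_eq_mul_integral hHi.1 hY1i.1, hY0, mul_zero]
    have e2 := hind2.integral_fun_mul_eq_mul_integral hX2i.1 hY2i.1
    have hbd : Integrable (fun zs => |X zs| ^ m + m * (H (X zs) * Y zs)
        + C * (|X zs| ^ (m - 2) * Y zs ^ 2 + |Y zs| ^ m)) P :=
      (ihi.add (i1.const_mul m)).add ((i2.add hYint).const_mul C)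
    have hpt : ∀ zs, |X zs + Y zs| ^ m ≤ |X zs| ^ m + m * (H (X zs) * Y zs)
        + C * (|X zs| ^ (m - 2) * Y zs ^ 2 + |Y zs| ^ m) := fun zs => aux_taylor hm _ _
    have hsum : ∀ zs : ι → Z, ∑ k ∈ insert j S, f (zs k) = X zs + Y zs := fun zs => by
      rw [Finset.sum_insert hj, add_comm]
    simp_rw [hsum]
    have hfin : Integrable (fun zs => |X zs + Y zs| ^ m) P := by
      refine Integrable.mono' hbd ?_ ?_
      · exact (by fun_prop : Measurable fun ω => |X ω + Y ω| ^ m).aestronglyMeasurable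
      · refine Filter.Eventually.of_forall fun ω => ?_
        rw [Real.norm_eq_abs, abs_of_nonneg (by positivity)]
        exact hpt ω
    refine ⟨hfin, (integral_mono hfin hbd hpt).trans ?_⟩
    have j1 : Integrable (fun zs => |X zs| ^ m + m * (H (X zs) * Y zs)) P :=
      ihi.add (i1.const_mul m)
    have j2 : Integrable (fun zs => C * (|X zs| ^ (m - 2) * Y zs ^ 2 + |Y zs| ^ m)) P :=
      (i2.add hYint).const_mul C
    rw [integral_add j1 j2, integral_add ihi (i1.const_mul m), integral_const_mul, integral_const_mul,
      integral_add i2 hYint, e1, e2, hYb]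
    rw [hYb] at hY2
    have hx0 : 0 ≤ K * (#S : ℝ) := mul_nonneg (by linarith) (by positivity)
    set x := K * (#S : ℝ) with hx
    have h3 : (∫ zs, |X zs| ^ (m - 2) ∂P) * (∫ zs, Y zs ^ 2 ∂P) ≤ x ^ (m / 2 - 1) * b := by
      calc _ ≤ (x ^ (m / 2) * b) ^ ((m - 2) / m) * b ^ (2 / m) := by
            gcongr
            · refine hX2.trans ?_
              exact Real.rpow_le_rpow (integral_nonneg fun _ => by positivity) ihb
                (div_nonneg (by linarith) hm0.le)
        _ = x ^ (m / 2 - 1) * b := by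
            rw [Real.mul_rpow (by positivity) hb0, ← Real.rpow_mul hx0, mul_assoc,
              ← Real.rpow_add' hb0]
            · congr 1
              · congr 1; field_simp
              · rw [← add_div]; simp [hm0.ne']
            · rw [← add_div]; simp [hm0.ne']
    have h4 := aux_num hx0 hC0 hK (p := m / 2) (by linarith)
    rw [Finset.card_insert_of_notMem hj]
    push_cast
    rw [show K * ((#S : ℝ) + 1) = x + K by rw [hx]; ring]
    have h5 := mul_le_mul_of_nonneg_right h4 hb0
    have h6 := mul_le_mul_of_nonneg_left h3 hC0
    nlinarith

lemma aux_g {x r : ℝ} (hx : 0 < x) (hr1 : 1 ≤ r) (hr2 : r ≤ 2) {a : ℝ} (ha : 0 ≤ a)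
    (hxa : -Real.log x ≤ a) :
    |Real.log x - x + 1| ≤ 4 * (|x - 1| ^ r * (1 + a)) := by
  have hle : Real.log x ≤ x - 1 := Real.log_le_sub_one_of_pos hx
  have habs : |Real.log x - x + 1| = x - 1 - Real.log x := by
    rw [abs_of_nonpos (by linarith)]; ring
  rw [habs]
  have hlow : 1 - 1 / x ≤ Real.log x := by
    have := Real.one_sub_inv_le_log_of_pos hx
    simpa [one_div] using this
  have hp : 0 ≤ |x - 1| ^ r := by positivity
  have hmain : x - 1 - Real.log x ≤ 4 * |x - 1| ^ r * (1 + a) := by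
    rcases le_total 2 x with h2 | h2
    · have hl : 0 ≤ Real.log x := Real.log_nonneg (by linarith)
      have : |x - 1| ≤ |x - 1| ^ r := by
        apply Real.self_le_rpow_of_one_le _ hr1
        rw [abs_of_nonneg (by linarith)]; linarith
      rw [abs_of_nonneg (by linarith : 0 ≤ x - 1)] at *
      nlinarith
    · have h1 : |x - 1| ≤ 1 := by rw [abs_le]; constructor <;> linarith
      have hsq : (x - 1) ^ 2 ≤ |x - 1| ^ r := by
        rw [← sq_abs, ← Real.rpow_two]
        rcases (abs_nonneg (x - 1)).eq_or_lt with h0 | h0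
        · rw [← h0, Real.zero_rpow (by norm_num), Real.zero_rpow (by linarith)]
        · exact Real.rpow_le_rpow_of_exponent_ge h0 h1 hr2
      rcases le_total (1 / 2) x with h3 | h3
      · have : x - 1 - Real.log x ≤ (x - 1) ^ 2 / x := by
          have : (x - 1) ^ 2 / x = x - 2 + 1 / x := by field_simp; ring
          linarith
        have h4 : (x - 1) ^ 2 / x ≤ 2 * (x - 1) ^ 2 := by
          rw [div_le_iff₀ hx]; nlinarith [sq_nonneg (x - 1)]
        nlinarith
      · have h4 : 1 / 4 ≤ (x - 1) ^ 2 := by nlinarith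
        nlinarith
  linarith

lemma aux_log_mean {ι : Type*} (S : Finset ι) (hS : S.Nonempty) (v : ι → ℝ) (hv : ∀ k, 0 < v k) :
    -Real.log ((∑ k ∈ S, v k) / #S) ≤ (∑ k ∈ S, |Real.log (v k)|) / #S := by
  have hn : (0 : ℝ) < #S := by exact_mod_cast hS.card_pos
  have h := strictConcaveOn_log_Ioi.concaveOn.le_map_sum (t := S) (w := fun _ => (1 : ℝ) / #S)
    (p := v) (fun _ _ => by positivity) (by simp [hn.ne']) (fun k _ => hv k)
  simp only [smul_eq_mul, ← Finset.mul_sum] at h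
  have h2 : -∑ k ∈ S, Real.log (v k) ≤ ∑ k ∈ S, |Real.log (v k)| := by
    rw [← Finset.sum_neg_distrib]
    exact Finset.sum_le_sum fun k _ => neg_le_abs _
  have h3 : (∑ k ∈ S, v k) / #S = 1 / #S * ∑ k ∈ S, v k := by ring
  rw [h3, div_eq_mul_one_div (∑ k ∈ S, |Real.log (v k)|), mul_comm (∑ k ∈ S, |Real.log (v k)|)]
  have := mul_le_mul_of_nonneg_left h2 (by positivity : (0:ℝ) ≤ 1 / #S)
  linarith

lemma aux_point {ι : Type*} (S : Finset ι) (hS : S.Nonempty) (v : ι → ℝ) (hv : ∀ k, 0 < v k)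
    {r κ m t : ℝ} (hr1 : 1 ≤ r) (hr2 : r ≤ 2) (hκ : 0 < κ) (hm : 0 < m) (ht : 1 ≤ t)
    (he : κ * r / m + κ / t = 1) :
    |Real.log ((∑ k ∈ S, v k) / #S) - (∑ k ∈ S, v k) / #S + 1| ^ κ
      ≤ (4 ^ κ * (#S : ℝ) ^ (-(κ * r / 2))) *
        ((#S : ℝ) ^ (-(m / 2)) * |∑ k ∈ S, (v k - 1)| ^ m
          + (∑ k ∈ S, (1 + |Real.log (v k)|) ^ t) / #S) := by
  have hn : (0 : ℝ) < #S := by exact_mod_cast hS.card_pos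
  set n : ℝ := (#S : ℝ) with hnd
  set Y := (∑ k ∈ S, v k) / n with hY
  have hYp : 0 < Y := div_pos (Finset.sum_pos (fun k _ => hv k) hS) hn
  set A0 := (∑ k ∈ S, |Real.log (v k)|) / n with hA0
  have hA0n : 0 ≤ A0 := by positivity
  have h1 := aux_g hYp hr1 hr2 hA0n (aux_log_mean S hS v hv)
  have hA : 1 + A0 = ∑ k ∈ S, (1 / n) * (1 + |Real.log (v k)|) := by
    rw [← Finset.mul_sum, Finset.sum_add_distrib, hA0]
    simp [← hnd]; field_simp
  have hAt : (1 + A0) ^ t ≤ (∑ k ∈ S, (1 + |Real.log (v k)|) ^ t) / n := by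
    rw [hA]
    refine (Real.rpow_arith_mean_le_arith_mean_rpow S (fun _ => 1 / n) _
      (fun _ _ => by positivity) (by simp [← hnd, hn.ne']) (fun _ _ => by positivity) ht).trans ?_
    rw [← Finset.mul_sum, one_div, inv_mul_eq_div]
  set D := |Y - 1| with hD
  have hD0 : 0 ≤ D := abs_nonneg _
  have hDs : |∑ k ∈ S, (v k - 1)| = n * D := by
    rw [hD]
    nth_rewrite 1 [← abs_of_pos hn]
    rw [← abs_mul, hY]
    congr 1
    rw [Finset.sum_sub_distrib]; simp [← hnd]; field_simp
  have hm' : n ^ (-(m / 2)) * |∑ k ∈ S, (v k - 1)| ^ m = n ^ (m / 2) * D ^ m := by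
    rw [hDs, Real.mul_rpow hn.le hD0, ← mul_assoc, ← Real.rpow_add hn]; congr 2; ring
  have ht0 : 0 < t := by linarith
  have hyoung : n ^ (κ * r / 2) * D ^ (κ * r) * (1 + A0) ^ κ ≤ n ^ (m / 2) * D ^ m + (1 + A0) ^ t := by
    have h := Real.geom_mean_le_arith_mean2_weighted (w₁ := κ * r / m) (w₂ := κ / t)
      (p₁ := n ^ (m / 2) * D ^ m) (p₂ := (1 + A0) ^ t) (by positivity) (by positivity)
      (by positivity) (by positivity) he
    have e1 : (n ^ (m / 2) * D ^ m) ^ (κ * r / m) = n ^ (κ * r / 2) * D ^ (κ * r) := by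
      rw [Real.mul_rpow (by positivity) (by positivity), ← Real.rpow_mul hn.le,
        ← Real.rpow_mul hD0]
      congr 2 <;> field_simp
    have e2 : ((1 + A0) ^ t) ^ (κ / t) = (1 + A0) ^ κ := by
      rw [← Real.rpow_mul (by positivity)]; congr 1; field_simp
    rw [e1, e2] at h
    have a1 : κ * r / m ≤ 1 := by
      have : 0 ≤ κ / t := by positivity
      linarith
    have a2 : κ / t ≤ 1 := by
      have : 0 ≤ κ * r / m := by positivity
      linarith
    have b1 : 0 ≤ n ^ (m / 2) * D ^ m := by positivity
    have b2 : 0 ≤ (1 + A0) ^ t := by positivity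
    nlinarith
  calc _ ≤ (4 * (D ^ r * (1 + A0))) ^ κ := Real.rpow_le_rpow (abs_nonneg _) h1 hκ.le
    _ = (4 ^ κ * n ^ (-(κ * r / 2))) * (n ^ (κ * r / 2) * D ^ (κ * r) * (1 + A0) ^ κ) := by
      rw [Real.mul_rpow (by norm_num) (by positivity), Real.mul_rpow (by positivity) (by positivity),
        ← Real.rpow_mul hD0, Real.rpow_neg hn.le, mul_comm r κ]
      have : n ^ (κ * r / 2) ≠ 0 := by positivity
      field_simp
    _ ≤ _ := by
      rw [hm']
      gcongr
      exact hyoung.trans (by gcongr)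

lemma aux_key {ι Z : Type*} [Fintype ι] [DecidableEq ι] [MeasurableSpace Z] (μ : Measure Z)
    [IsProbabilityMeasure μ] {v : Z → ℝ} (hvm : Measurable v) (hv : ∀ z, 0 < v z)
    (h1 : ∫ z, v z ∂μ = 1) {K r κ m t : ℝ} (hr1 : 1 ≤ r) (hr2 : r ≤ 2) (hκ : 0 < κ)
    (hm : 2 ≤ m) (ht : 1 ≤ t) (he : κ * r / m + κ / t = 1)
    (hK : 2 * ((m + 1) ^ m + m ^ m + m ^ 2) + 1 ≤ K) (S : Finset ι) (hS : S.Nonempty) :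
    ∫⁻ zs, ENNReal.ofReal (|Real.log ((∑ k ∈ S, v (zs k)) / #S)
        - (∑ k ∈ S, v (zs k)) / #S + 1| ^ κ) ∂(Measure.pi fun _ : ι => μ)
      ≤ ENNReal.ofReal (4 ^ κ * (#S : ℝ) ^ (-(κ * r / 2))) *
        ∫⁻ z, ENNReal.ofReal (K ^ (m / 2) * |v z - 1| ^ m + (1 + |Real.log (v z)|) ^ t) ∂μ := by
  have hm0 : 0 < m := by linarith
  have hn : (0 : ℝ) < #S := by exact_mod_cast hS.card_pos
  have hK1 : 1 ≤ K := by
    have : 0 ≤ (m + 1) ^ m + m ^ m + m ^ 2 := by positivity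
    linarith
  have hKp : 1 ≤ K ^ (m / 2) := Real.one_le_rpow hK1 (by linarith)
  set G : Z → ℝ := fun z => K ^ (m / 2) * |v z - 1| ^ m + (1 + |Real.log (v z)|) ^ t with hG
  have hG0 : ∀ z, 0 ≤ G z := fun z => by positivity
  have hGm : Measurable G := by fun_prop
  by_cases hGi : Integrable G μ
  swap
  · have : ∫⁻ z, ENNReal.ofReal (G z) ∂μ = ⊤ := by
      by_contra hne
      exact hGi ((lintegral_ofReal_ne_top_iff_integrable hGm.aestronglyMeasurable
        (Filter.Eventually.of_forall hG0)).1 hne)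
    rw [this, ENNReal.mul_top]
    · exact le_top
    · rw [Ne, ENNReal.ofReal_eq_zero, not_le]; positivity
  have i1 : Integrable (fun z => |v z - 1| ^ m) μ := by
    refine Integrable.mono' hGi (by fun_prop : Measurable fun z => |v z - 1| ^ m).aestronglyMeasurable ?_
    refine Filter.Eventually.of_forall fun z => ?_
    rw [Real.norm_eq_abs, abs_of_nonneg (by positivity)]
    have a : 0 ≤ |v z - 1| ^ m := by positivity
    have b : 0 ≤ (1 + |Real.log (v z)|) ^ t := by positivity
    simp only [hG]; nlinarith
  have i2 : Integrable (fun z => (1 + |Real.log (v z)|) ^ t) μ := by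
    refine Integrable.mono' hGi (by fun_prop : Measurable fun z => (1 + |Real.log (v z)|) ^ t).aestronglyMeasurable ?_
    refine Filter.Eventually.of_forall fun z => ?_
    rw [Real.norm_eq_abs, abs_of_nonneg (by positivity)]
    have a : 0 ≤ |v z - 1| ^ m := by positivity
    simp only [hG]; nlinarith
  have hvi : Integrable v μ := by
    by_contra h
    rw [integral_undef h] at h1
    norm_num at h1
  have h0 : ∫ z, (v z - 1) ∂μ = 0 := by
    rw [integral_sub hvi (integrable_const _), h1]; simp
  obtain ⟨j1, j1b⟩ := aux_mz μ (f := fun z => v z - 1) (by fun_prop) hm h0 i1 hK S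
  set P := Measure.pi fun _ : ι => μ with hP
  have j2 : ∀ k, Integrable (fun zs : ι → Z => (1 + |Real.log (v (zs k))|) ^ t) P := fun k =>
    (measurePreserving_eval (fun _ : ι => μ) k).integrable_comp_of_integrable i2
  have j2b : ∀ k, ∫ zs : ι → Z, (1 + |Real.log (v (zs k))|) ^ t ∂P
      = ∫ z, (1 + |Real.log (v z)|) ^ t ∂μ := fun k => by
    conv_rhs => rw [← (measurePreserving_eval (fun _ : ι => μ) k).map_eq]
    rw [integral_map (measurable_pi_apply k).aemeasurable]
    · exact (by fun_prop : Measurable fun z => (1 + |Real.log (v z)|) ^ t).aestronglyMeasurable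
  have hFi1 : Integrable (fun zs : ι → Z =>
      (#S : ℝ) ^ (-(m / 2)) * |∑ k ∈ S, (v (zs k) - 1)| ^ m) P := j1.const_mul _
  have hFi2 : Integrable (fun zs : ι → Z =>
      (∑ k ∈ S, (1 + |Real.log (v (zs k))|) ^ t) / #S) P :=
    (integrable_finsetSum _ fun k _ => j2 k).div_const _
  have hFi := hFi1.add hFi2
  have hF : ∫ zs, ((#S : ℝ) ^ (-(m / 2)) * |∑ k ∈ S, (v (zs k) - 1)| ^ m
      + (∑ k ∈ S, (1 + |Real.log (v (zs k))|) ^ t) / #S) ∂P ≤ ∫ z, G z ∂μ := by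
    rw [integral_add hFi1 hFi2, integral_const_mul, integral_div,
      integral_finsetSum _ fun k _ => j2 k]
    simp only [hG, j2b]
    rw [integral_add (i1.const_mul _) i2, integral_const_mul, Finset.sum_const, nsmul_eq_mul,
      mul_div_cancel_left₀ _ hn.ne']
    refine add_le_add ?_ le_rfl
    refine (mul_le_mul_of_nonneg_left j1b (Real.rpow_nonneg hn.le _)).trans (le_of_eq ?_)
    rw [← mul_assoc, Real.mul_rpow (by linarith) hn.le, Real.rpow_neg hn.le]
    have : (#S : ℝ) ^ (m / 2) ≠ 0 := by positivity
    field_simp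
  set c := 4 ^ κ * (#S : ℝ) ^ (-(κ * r / 2)) with hc
  have hc0 : 0 ≤ c := by positivity
  calc _ ≤ ∫⁻ zs, ENNReal.ofReal (c * ((#S : ℝ) ^ (-(m / 2)) * |∑ k ∈ S, (v (zs k) - 1)| ^ m
      + (∑ k ∈ S, (1 + |Real.log (v (zs k))|) ^ t) / #S)) ∂P := by
        refine lintegral_mono fun zs => ENNReal.ofReal_le_ofReal ?_
        exact aux_point S hS (fun k => v (zs k)) (fun k => hv _) hr1 hr2 hκ hm0 ht he
    _ = ENNReal.ofReal c * ENNReal.ofReal (∫ zs, ((#S : ℝ) ^ (-(m / 2)) * |∑ k ∈ S, (v (zs k) - 1)| ^ m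
      + (∑ k ∈ S, (1 + |Real.log (v (zs k))|) ^ t) / #S) ∂P) := by
        rw [← ENNReal.ofReal_mul hc0, ← integral_const_mul, ofReal_integral_eq_lintegral_ofReal]
        · exact hFi.const_mul c
        · exact Filter.Eventually.of_forall fun zs => by
            simp only [Pi.zero_apply]; positivity
    _ ≤ ENNReal.ofReal c * ENNReal.ofReal (∫ z, G z ∂μ) := by gcongr
    _ = _ := by
        rw [ofReal_integral_eq_lintegral_ofReal hGi (Filter.Eventually.of_forall hG0)]

lemma aux_level (Z : Type*) [MeasurableSpace Z] {r κ m s t : ℝ} (hr1 : 1 ≤ r) (hr2 : r ≤ 2)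
    (hκ : 0 < κ) (hm : 2 ≤ m) (hms : m ≤ s) (ht : 1 ≤ t) (he : κ * r / m + κ / t = 1) :
    ∃ C > (0 : ℝ), ∀ (N : ℕ) (μ : Measure Z) [IsProbabilityMeasure μ] (v : Z → ℝ),
      Measurable v → (∀ z, 0 < v z) → ∫ z, v z ∂μ = 1 →
      ∀ S : Finset (Fin N), S.Nonempty →
      ∫⁻ zs, ENNReal.ofReal (|Real.log ((∑ k ∈ S, v (zs k)) / #S)
        - (∑ k ∈ S, v (zs k)) / #S + 1| ^ κ) ∂(Measure.pi fun _ : Fin N => μ)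
      ≤ ENNReal.ofReal (C * (#S : ℝ) ^ (-(κ * r / 2))) *
        ∫⁻ z, ENNReal.ofReal (1 + v z ^ s + |Real.log (v z)| ^ t) ∂μ := by
  set K := 2 * ((m + 1) ^ m + m ^ m + m ^ 2) + 1 with hK
  have hK0 : 0 < K := by positivity
  set B := K ^ (m / 2) * 2 ^ s + 2 ^ t with hB
  have hB0 : 0 < B := by positivity
  have two : ∀ (a p : ℝ), 0 ≤ a → 0 ≤ p → (1 + a) ^ p ≤ 2 ^ p * (1 + a ^ p) := by
    intro a p ha hp
    rcases le_total a 1 with h | h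
    · have h1 : (1 + a) ^ p ≤ 2 ^ p := Real.rpow_le_rpow (by linarith) (by linarith) hp
      have h2 : 0 ≤ a ^ p := by positivity
      have h3 : (0 : ℝ) < 2 ^ p := by positivity
      nlinarith
    · have h1 : (1 + a) ^ p ≤ (2 * a) ^ p := Real.rpow_le_rpow (by linarith) (by linarith) hp
      rw [Real.mul_rpow (by norm_num) ha] at h1
      have h3 : (0 : ℝ) < 2 ^ p := by positivity
      nlinarith
  refine ⟨4 ^ κ * B, by positivity, ?_⟩
  intro N μ _ v hvm hv h1 S hS
  refine (aux_key μ hvm hv h1 hr1 hr2 hκ hm ht he (le_refl K) S hS).trans ?_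
  rw [show 4 ^ κ * B * (#S : ℝ) ^ (-(κ * r / 2)) = 4 ^ κ * (#S : ℝ) ^ (-(κ * r / 2)) * B by ring,
    ENNReal.ofReal_mul (p := 4 ^ κ * (#S : ℝ) ^ (-(κ * r / 2))) (by positivity), mul_assoc]
  refine mul_le_mul' le_rfl ?_
  rw [← lintegral_const_mul' _ _ ENNReal.ofReal_ne_top]
  refine lintegral_mono fun z => ?_
  rw [← ENNReal.ofReal_mul hB0.le]
  apply ENNReal.ofReal_le_ofReal
  have hz := hv z
  have e1 : |v z - 1| ^ m ≤ 2 ^ s * (1 + v z ^ s) := by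
    calc |v z - 1| ^ m ≤ (1 + v z) ^ m := by
          apply Real.rpow_le_rpow (abs_nonneg _) _ (by linarith)
          rw [abs_le]; constructor <;> linarith
      _ ≤ (1 + v z) ^ s := Real.rpow_le_rpow_of_exponent_le (by linarith) hms
      _ ≤ _ := two _ _ hz.le (by linarith)
  have e2 := two |Real.log (v z)| t (abs_nonneg _) (by linarith)
  have p1 : 0 ≤ v z ^ s := by positivity
  have p2 : 0 ≤ |Real.log (v z)| ^ t := by positivity
  have p3 : 0 < K ^ (m / 2) := by positivity
  have p4 : (0 : ℝ) < 2 ^ s := by positivity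
  have p5 : (0 : ℝ) < 2 ^ t := by positivity
  have e3 := mul_le_mul_of_nonneg_left e1 p3.le
  rw [hB]
  nlinarith [mul_nonneg (mul_pos p3 p4).le p2, mul_nonneg p5.le p1]

lemma aux_joint {Θ 𝒳 𝒵 : Type*} [MeasurableSpace Θ] [MeasurableSpace 𝒳] [MeasurableSpace 𝒵]
    (r : Measure Θ) [IsProbabilityMeasure r] (ν : Measure 𝒳) [IsProbabilityMeasure ν]
    (q : Kernel 𝒳 𝒵) (n : ℕ) (f : Θ → 𝒳 → (Fin n → 𝒵) → ℝ) (I : Θ → 𝒳 → ℝ≥0∞) {c : ℝ}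
    (hc : 0 ≤ c) (hI : ∫⁻ θ, ∫⁻ x, I θ x ∂ν ∂r < ⊤)
    (h : ∀ᵐ θ ∂r, ∀ᵐ x ∂ν, ‖∫ zs, f θ x zs ∂(Measure.pi fun _ : Fin n => q x)‖ₑ
      ≤ ENNReal.ofReal c * I θ x) :
    |jointExp3 r ν q n f| ≤ c * (∫⁻ θ, ∫⁻ x, I θ x ∂ν ∂r).toReal := by
  have h1 : ‖jointExp3 r ν q n f‖ₑ ≤ ENNReal.ofReal c * ∫⁻ θ, ∫⁻ x, I θ x ∂ν ∂r := by
    unfold jointExp3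
    refine (enorm_integral_le_lintegral_enorm _).trans ?_
    rw [← lintegral_const_mul' _ _ ENNReal.ofReal_ne_top]
    refine lintegral_mono_ae (h.mono fun θ hθ => ?_)
    refine (enorm_integral_le_lintegral_enorm _).trans ?_
    rw [← lintegral_const_mul' _ _ ENNReal.ofReal_ne_top]
    exact lintegral_mono_ae hθ
  have h2 := ENNReal.toReal_mono (ENNReal.mul_ne_top ENNReal.ofReal_ne_top hI.ne) h1
  rwa [ENNReal.toReal_mul, ENNReal.toReal_ofReal hc, toReal_enorm, Real.norm_eq_abs] at h2

lemma aux_fin {Θ 𝒳 𝒵 : Type*} [MeasurableSpace Θ] [MeasurableSpace 𝒳] [MeasurableSpace 𝒵]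
    (r : Measure Θ) [IsProbabilityMeasure r] (ν : Measure 𝒳) [IsProbabilityMeasure ν]
    (q : Kernel 𝒳 𝒵) [IsMarkovKernel q] (f g : Θ → 𝒳 → 𝒵 → ℝ)
    (hf : Measurable fun p : Θ × 𝒳 × 𝒵 => f p.1 p.2.1 p.2.2)
    (hf0 : ∀ θ x z, 0 ≤ f θ x z) (hg0 : ∀ θ x z, 0 ≤ g θ x z)
    (h1 : (∫⁻ θ, ∫⁻ x, ∫⁻ z, ENNReal.ofReal (f θ x z) ∂(q x) ∂ν ∂r) < ⊤)
    (h2 : (∫⁻ θ, ∫⁻ x, ∫⁻ z, ENNReal.ofReal (g θ x z) ∂(q x) ∂ν ∂r) < ⊤) :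
    (∫⁻ θ, ∫⁻ x, ∫⁻ z, ENNReal.ofReal (f θ x z + g θ x z) ∂(q x) ∂ν ∂r) < ⊤ := by
  have m1 : Measurable fun p : Θ × 𝒳 => ∫⁻ z, ENNReal.ofReal (f p.1 p.2 z) ∂(q p.2) := by
    have : Measurable (Function.uncurry fun (p : Θ × 𝒳) (z : 𝒵) =>
        ENNReal.ofReal (f p.1 p.2 z)) := by
      have e : Measurable fun u : (Θ × 𝒳) × 𝒵 => (u.1.1, u.1.2, u.2) := by fun_prop
      exact (hf.comp e).ennreal_ofReal
    exact Measurable.lintegral_kernel_prod_right (κ := Kernel.prodMkLeft Θ q) this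
  have m2 : Measurable fun θ => ∫⁻ x, ∫⁻ z, ENNReal.ofReal (f θ x z) ∂(q x) ∂ν :=
    m1.lintegral_prod_right'
  have m3 : ∀ θ, Measurable fun x => ∫⁻ z, ENNReal.ofReal (f θ x z) ∂(q x) := fun θ =>
    m1.comp (by fun_prop : Measurable fun x : 𝒳 => (θ, x))
  have m4 : ∀ θ x, Measurable fun z => ENNReal.ofReal (f θ x z) := fun θ x =>
    (hf.comp (by fun_prop : Measurable fun z : 𝒵 => (θ, x, z))).ennreal_ofReal
  have e : (∫⁻ θ, ∫⁻ x, ∫⁻ z, ENNReal.ofReal (f θ x z + g θ x z) ∂(q x) ∂ν ∂r)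
      = (∫⁻ θ, ∫⁻ x, ∫⁻ z, ENNReal.ofReal (f θ x z) ∂(q x) ∂ν ∂r)
        + (∫⁻ θ, ∫⁻ x, ∫⁻ z, ENNReal.ofReal (g θ x z) ∂(q x) ∂ν ∂r) := by
    rw [← lintegral_add_left m2]
    refine lintegral_congr fun θ => ?_
    rw [← lintegral_add_left (m3 θ)]
    refine lintegral_congr fun x => ?_
    rw [← lintegral_add_left (m4 θ x)]
    refine lintegral_congr fun z => ?_
    rw [ENNReal.ofReal_add (hf0 _ _ _) (hg0 _ _ _)]
  rw [e]
  exact ENNReal.add_lt_top.2 ⟨h1, h2⟩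

/-- bias, conditional version -/
lemma aux_bias {Z : Type*} [MeasurableSpace Z] (μ : Measure Z) [IsProbabilityMeasure μ]
    {v : Z → ℝ} (h1 : ∫ z, v z ∂μ = 1) (n : ℕ) (hn : n ≠ 0) :
    ‖∫ zs, Real.log ((∑ k, v (zs k)) / n) ∂(Measure.pi fun _ : Fin n => μ)‖ₑ
      ≤ ∫⁻ zs, ENNReal.ofReal |Real.log ((∑ k, v (zs k)) / n)
        - (∑ k, v (zs k)) / n + 1| ∂(Measure.pi fun _ : Fin n => μ) := by
  set P := Measure.pi fun _ : Fin n => μ with hP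
  have hvi : Integrable v μ := by
    by_contra h
    rw [integral_undef h] at h1
    norm_num at h1
  have hk : ∀ k, Integrable (fun zs : Fin n → Z => v (zs k)) P := fun k =>
    (measurePreserving_eval (fun _ : Fin n => μ) k).integrable_comp_of_integrable hvi
  have hkb : ∀ k, ∫ zs : Fin n → Z, v (zs k) ∂P = 1 := fun k => by
    rw [← h1]
    have e := (measurePreserving_eval (fun _ : Fin n => μ) k).map_eq
    conv_rhs => rw [← e]
    rw [integral_map (measurable_pi_apply k).aemeasurable]
    rw [show Measure.map (fun f : Fin n → Z => f k) (Measure.pi fun _ : Fin n => μ) = μ from e]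
    exact hvi.1
  by_cases hl : Integrable (fun zs : Fin n → Z => Real.log ((∑ k, v (zs k)) / n)) P
  · have hY : Integrable (fun zs : Fin n → Z => (∑ k, v (zs k)) / n) P :=
      (integrable_finsetSum _ fun k _ => hk k).div_const _
    have hYb : ∫ zs : Fin n → Z, (∑ k, v (zs k)) / n ∂P = 1 := by
      rw [integral_div, integral_finsetSum _ fun k _ => hk k]
      simp [hkb, hn]
    have : ∫ zs, Real.log ((∑ k, v (zs k)) / n) ∂P
        = ∫ zs, (Real.log ((∑ k, v (zs k)) / n) - (∑ k, v (zs k)) / n + 1) ∂P := by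
      have hs : Integrable (fun zs : Fin n → Z => Real.log ((∑ k, v (zs k)) / n)
        - (∑ k, v (zs k)) / n) P := hl.sub hY
      rw [integral_add hs (integrable_const _), integral_sub hl hY, hYb]
      simp
    rw [this]
    refine (enorm_integral_le_lintegral_enorm _).trans (le_of_eq ?_)
    simp_rw [Real.enorm_eq_ofReal_abs]
  · rw [integral_undef hl]; simp

lemma aux_sum_split {n : ℕ} (F : Fin (2 * n) → ℝ) :
    ∑ k, F k = ∑ k : Fin n, F ⟨k.1, by have := k.2; omega⟩
      + ∑ k : Fin n, F ⟨n + k.1, by have := k.2; omega⟩ := by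
  have : ∑ k, F k = ∑ k : Fin (n + n), F (Fin.cast (two_mul n).symm k) :=
    (Fintype.sum_equiv (finCongr (two_mul n).symm) _ _ fun k => rfl).symm
  rw [this, Fin.sum_univ_add]
  rfl

lemma aux_delta {Θ 𝒳 𝒵 : Type*} [MeasurableSpace 𝒵] (w : Θ → 𝒳 → 𝒵 → ℝ) (θ : Θ) (x : 𝒳)
    (hwm : Measurable (w θ x)) (μ : Measure 𝒵) [IsProbabilityMeasure μ]
    (n : ℕ) (hn : n ≠ 0) {c : ℝ} {I : ℝ≥0∞}
    (h : ∀ S : Finset (Fin (2 * n)), S.Nonempty → n ≤ #S →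
      ∫⁻ zs, ENNReal.ofReal (|Real.log ((∑ k ∈ S, w θ x (zs k)) / #S)
        - (∑ k ∈ S, w θ x (zs k)) / #S + 1| ^ (2:ℝ)) ∂(Measure.pi fun _ : Fin (2 * n) => μ)
      ≤ ENNReal.ofReal c * I) :
    ∫⁻ zs, ENNReal.ofReal (mlmcCorrection3 w n θ x zs ^ 2) ∂(Measure.pi fun _ : Fin (2 * n) => μ)
      ≤ ENNReal.ofReal (4 * c) * I := by
  set v := w θ x with hv
  have hnR : (n : ℝ) ≠ 0 := by exact_mod_cast hn
  set ea : Fin n ↪ Fin (2 * n) := ⟨fun k => ⟨k.1, by have := k.2; omega⟩, fun a b hab => by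
    simpa [Fin.ext_iff] using hab⟩ with hea
  set eb : Fin n ↪ Fin (2 * n) := ⟨fun k => ⟨n + k.1, by have := k.2; omega⟩, fun a b hab => by
    simpa [Fin.ext_iff] using hab⟩ with heb
  have hea' : ∀ k, ea k = ⟨k.1, by have := k.2; omega⟩ := fun _ => rfl
  have heb' : ∀ k, eb k = ⟨n + k.1, by have := k.2; omega⟩ := fun _ => rfl
  set g : Finset (Fin (2 * n)) → (Fin (2 * n) → 𝒵) → ℝ := fun S zs =>
    Real.log ((∑ k ∈ S, v (zs k)) / #S) - (∑ k ∈ S, v (zs k)) / #S + 1 with hg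
  have hgm : ∀ S, Measurable (g S) := fun S => by
    have : Measurable fun zs : Fin (2 * n) → 𝒵 => (∑ k ∈ S, v (zs k)) / #S := by fun_prop
    exact ((Real.measurable_log.comp this).sub this).add_const 1
  have hgS : ∀ S : Finset (Fin (2 * n)), S.Nonempty → n ≤ #S →
      ∫⁻ zs, ENNReal.ofReal (g S zs ^ 2) ∂(Measure.pi fun _ : Fin (2 * n) => μ)
        ≤ ENNReal.ofReal c * I := fun S h1 h2 => by
    have := h S h1 h2
    simp only [Real.rpow_two, sq_abs] at this
    exact this
  have hne : Nonempty (Fin n) := ⟨⟨0, Nat.pos_of_ne_zero hn⟩⟩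
  have hne2 : Nonempty (Fin (2 * n)) := ⟨ea hne.some⟩
  have hu := hgS univ Finset.univ_nonempty (by simp; omega)
  have ha := hgS (univ.map ea) (by simp) (by simp)
  have hb := hgS (univ.map eb) (by simp) (by simp)
  have hpt : ∀ zs, mlmcCorrection3 w n θ x zs ^ 2
      ≤ 2 * g univ zs ^ 2 + g (univ.map ea) zs ^ 2 + g (univ.map eb) zs ^ 2 := by
    intro zs
    have hD : mlmcCorrection3 w n θ x zs
        = g univ zs - (g (univ.map ea) zs + g (univ.map eb) zs) / 2 := by
      have hs := aux_sum_split fun k => v (zs k)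
      simp only [mlmcCorrection3, hg, Finset.sum_map, Finset.card_map, Finset.card_univ,
        Fintype.card_fin, hea', heb', ← hv]
      rw [hs]
      generalize ∑ k : Fin n, v (zs ⟨k.1, by have := k.2; omega⟩) = A
      generalize ∑ k : Fin n, v (zs ⟨n + k.1, by have := k.2; omega⟩) = B
      push_cast
      field_simp
      ring
    rw [hD]
    nlinarith [sq_nonneg (g univ zs + (g (univ.map ea) zs + g (univ.map eb) zs) / 2),
      sq_nonneg (g (univ.map ea) zs - g (univ.map eb) zs)]
  calc _ ≤ ∫⁻ zs, (2 * ENNReal.ofReal (g univ zs ^ 2) + ENNReal.ofReal (g (univ.map ea) zs ^ 2)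
          + ENNReal.ofReal (g (univ.map eb) zs ^ 2)) ∂(Measure.pi fun _ : Fin (2 * n) => μ) := by
        refine lintegral_mono fun zs => (ENNReal.ofReal_le_ofReal (hpt zs)).trans (le_of_eq ?_)
        rw [ENNReal.ofReal_add (by positivity) (by positivity),
          ENNReal.ofReal_add (by positivity) (by positivity), ENNReal.ofReal_mul (by norm_num)]
        norm_num
    _ = 2 * (∫⁻ zs, ENNReal.ofReal (g univ zs ^ 2) ∂(Measure.pi fun _ : Fin (2 * n) => μ))
        + (∫⁻ zs, ENNReal.ofReal (g (univ.map ea) zs ^ 2) ∂(Measure.pi fun _ : Fin (2 * n) => μ))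
        + (∫⁻ zs, ENNReal.ofReal (g (univ.map eb) zs ^ 2) ∂(Measure.pi fun _ : Fin (2 * n) => μ)) := by
        rw [lintegral_add_right _ ((hgm _).pow_const 2).ennreal_ofReal,
          lintegral_add_right _ ((hgm _).pow_const 2).ennreal_ofReal,
          lintegral_const_mul' _ _ (by norm_num)]
    _ ≤ 2 * (ENNReal.ofReal c * I) + ENNReal.ofReal c * I + ENNReal.ofReal c * I := by gcongr
    _ = ENNReal.ofReal (4 * c) * I := by
        rw [ENNReal.ofReal_mul (by norm_num), show ENNReal.ofReal 4 = 4 by norm_num]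
        ring

/-- **MLMC rates for the locally marginalized evidence lower bound** (Theorem 4/appendix
Theorem of the paper).  Let `(Θ, X) ~ r ⊗ ν` and, conditionally on `(Θ, X)`, let
`Z₁, Z₂, …` be i.i.d. `~ q(·; X)`; let `w > 0` be the normalized weight,
`∫ w(θ,x,z) q(dz;x) = 1` for a.e. `(θ,x)`, and `Ȳ_K = (1/K)∑_{k=1}^K w(Θ,X,Z_k)`.
If `E[w^s] < ∞` and `E[|log w|^t] < ∞` for some `s, t > 2` with `(s−2)(t−2) ≥ 4`, then
there is `c > 0` such that the coupled corrections satisfy `Var[Δ_ℓ] ≤ c·2^{−βℓ}` for all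
`ℓ ≥ 1` with `β = min(s(t−2)/(2t), 2)`, and the bias satisfies
`|E[log Ȳ_{2^ℓ}]| ≤ c·2^{−αℓ}` for all `ℓ ≥ 0` with `α = min(s(t−1)/(2t), 1)`. -/
theorem lmelbo_mlmc_rates
    {Θ 𝒳 𝒵 : Type*} [MeasurableSpace Θ] [MeasurableSpace 𝒳] [MeasurableSpace 𝒵]
    (r : Measure Θ) [IsProbabilityMeasure r]
    (ν : Measure 𝒳) [IsProbabilityMeasure ν]
    (q : Kernel 𝒳 𝒵) [IsMarkovKernel q]
    (w : Θ → 𝒳 → 𝒵 → ℝ)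
    (hw_meas : Measurable fun p : Θ × 𝒳 × 𝒵 => w p.1 p.2.1 p.2.2)
    (hw_pos : ∀ θ x z, 0 < w θ x z)
    (hw_norm : ∀ᵐ p ∂(r.prod ν), ∫ z, w p.1 p.2 z ∂(q p.2) = 1)
    (s t : ℝ) (hs : 2 < s) (ht : 2 < t) (hst : 4 ≤ (s - 2) * (t - 2))
    (hws : (∫⁻ θ, ∫⁻ x, ∫⁻ z, ENNReal.ofReal (w θ x z ^ s) ∂(q x) ∂ν ∂r) < ⊤)
    (hwt : (∫⁻ θ, ∫⁻ x, ∫⁻ z, ENNReal.ofReal (|Real.log (w θ x z)| ^ t) ∂(q x) ∂ν ∂r) < ⊤) :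
    ∃ c > (0 : ℝ),
      (∀ ℓ : ℕ, 1 ≤ ℓ →
        jointExp3 r ν q (2 * 2 ^ (ℓ - 1)) (fun θ x zs =>
            (mlmcCorrection3 w (2 ^ (ℓ - 1)) θ x zs
              - jointExp3 r ν q (2 * 2 ^ (ℓ - 1)) (mlmcCorrection3 w (2 ^ (ℓ - 1)))) ^ 2)
          ≤ c * (2 : ℝ) ^ (-(min (s * (t - 2) / (2 * t)) 2) * ℓ)) ∧
      (∀ ℓ : ℕ,
        |jointExp3 r ν q (2 ^ ℓ) (fun θ x zs => Real.log ((∑ k, w θ x (zs k)) / 2 ^ ℓ))|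
          ≤ c * (2 : ℝ) ^ (-(min (s * (t - 1) / (2 * t)) 1) * ℓ)) := by
  classical
  set I : Θ → 𝒳 → ℝ≥0∞ := fun θ x =>
    ∫⁻ z, ENNReal.ofReal (1 + w θ x z ^ s + |Real.log (w θ x z)| ^ t) ∂(q x) with hIdef
  have hI1 : ∀ θ x, 1 ≤ I θ x := fun θ x => by
    calc (1 : ℝ≥0∞) = ∫⁻ z, 1 ∂(q x) := by simp
      _ ≤ I θ x := by
        refine lintegral_mono fun z => ?_
        rw [← ENNReal.ofReal_one]
        apply ENNReal.ofReal_le_ofReal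
        have := hw_pos θ x z
        have : 0 ≤ w θ x z ^ s := by positivity
        have : 0 ≤ |Real.log (w θ x z)| ^ t := by positivity
        linarith
  have hI : ∫⁻ θ, ∫⁻ x, I θ x ∂ν ∂r < ⊤ := by
    have hms : Measurable fun p : Θ × 𝒳 × 𝒵 => w p.1 p.2.1 p.2.2 ^ s := hw_meas.pow_const s
    have p1 : ∀ θ x z, 0 ≤ w θ x z ^ s := fun θ x z => Real.rpow_nonneg (hw_pos θ x z).le _
    refine aux_fin r ν q (fun θ x z => 1 + w θ x z ^ s) (fun θ x z => |Real.log (w θ x z)| ^ t)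
      (hms.const_add 1) (fun θ x z => by linarith [p1 θ x z]) (fun θ x z => by positivity) ?_ hwt
    exact aux_fin r ν q (fun θ x z => 1) (fun θ x z => w θ x z ^ s) measurable_const
      (fun _ _ _ => zero_le_one) p1 (by simp) hws
  set M := (∫⁻ θ, ∫⁻ x, I θ x ∂ν ∂r).toReal with hM
  have hM0 : 0 ≤ M := ENNReal.toReal_nonneg
  have hnorm : ∀ᵐ θ ∂r, ∀ᵐ x ∂ν, ∫ z, w θ x z ∂(q x) = 1 := Measure.ae_ae_of_ae_prod hw_norm
  have hwm : ∀ θ x, Measurable (w θ x) := fun θ x =>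
    hw_meas.comp (by fun_prop : Measurable fun z : 𝒵 => (θ, x, z))
  have ht0 : 0 < t := by linarith
  have ht2 : 0 < t - 2 := by linarith
  have ht1 : 0 < t - 1 := by linarith
  -- parameters for the variance
  set β := min (s * (t - 2) / (2 * t)) 2 with hβ
  have hβ1 : 1 ≤ β := by
    refine le_min ?_ (by norm_num)
    rw [le_div_iff₀ (by positivity)]; nlinarith
  have hβ2 : β ≤ 2 := min_le_right _ _
  have hβs : 2 * β * t / (t - 2) ≤ s := by
    have := min_le_left (s * (t - 2) / (2 * t)) 2
    rw [← hβ, le_div_iff₀ (by positivity)] at this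
    rw [div_le_iff₀ ht2]; linarith
  obtain ⟨C₂, hC₂, H₂⟩ := aux_level 𝒵 (r := β) (κ := 2) (m := 2 * β * t / (t - 2)) (s := s)
    (t := t) hβ1 hβ2 (by norm_num) (by rw [le_div_iff₀ ht2]; nlinarith) hβs (by linarith)
    (by field_simp; ring)
  -- parameters for the bias
  set ρ := min (s * (t - 1) / t) 2 with hρ
  have hρ2 : ρ ≤ 2 := min_le_right _ _
  have hρt : 2 * (t - 1) ≤ ρ * t := by
    rw [hρ]
    rcases min_choice (s * (t - 1) / t) 2 with h | h <;> rw [h]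
    · rw [div_mul_cancel₀ _ ht0.ne']; nlinarith
    · linarith
  have hρ1 : 1 ≤ ρ := by
    by_contra h
    nlinarith
  have hρs : ρ * t / (t - 1) ≤ s := by
    have := min_le_left (s * (t - 1) / t) 2
    rw [← hρ, le_div_iff₀ (by positivity)] at this
    rw [div_le_iff₀ ht1]; linarith
  have hα : min (s * (t - 1) / (2 * t)) 1 = ρ / 2 := by
    rw [hρ, ← min_div_div_right (by norm_num : (0:ℝ) ≤ 2)]
    congr 1
    · field_simp
    · norm_num
  obtain ⟨C₁, hC₁, H₁⟩ := aux_level 𝒵 (r := ρ) (κ := 1) (m := ρ * t / (t - 1)) (s := s)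
    (t := t) hρ1 hρ2 (by norm_num) (by rw [le_div_iff₀ ht1]; exact hρt) hρs (by linarith)
    (by have : ρ ≠ 0 := by linarith
        field_simp; ring)
  refine ⟨C₁ * M + 16 * C₂ * ((2 + 8 * M ^ 2) * M) + 1, by positivity, ?_, ?_⟩
  · intro ℓ hℓ
    set n := 2 ^ (ℓ - 1) with hn
    have hn0 : n ≠ 0 := by positivity
    have hnR : (0 : ℝ) < n := by exact_mod_cast Nat.pos_of_ne_zero hn0
    set c := 4 * (C₂ * (n : ℝ) ^ (-β)) with hc
    have hc0 : 0 < c := by positivity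
    have hD : ∀ᵐ θ ∂r, ∀ᵐ x ∂ν, ∫⁻ zs, ENNReal.ofReal (mlmcCorrection3 w n θ x zs ^ 2)
        ∂(Measure.pi fun _ : Fin (2 * n) => q x) ≤ ENNReal.ofReal c * I θ x := by
      refine hnorm.mono fun θ hθ => hθ.mono fun x hx => ?_
      refine aux_delta w θ x (hwm θ x) (q x) n hn0 fun S hS hnS => ?_
      refine (H₂ (2 * n) (q x) (w θ x) (hwm θ x) (hw_pos θ x) hx S hS).trans ?_
      refine mul_le_mul' (ENNReal.ofReal_le_ofReal ?_) le_rfl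
      rw [show -(2 * β / 2) = -β by ring]
      gcongr ?_ * ?_
      exact Real.rpow_le_rpow_of_nonpos hnR (by exact_mod_cast hnS) (by linarith)
    set e := jointExp3 r ν q (2 * n) (mlmcCorrection3 w n) with he
    have hsq : 0 < √c := Real.sqrt_pos.2 hc0
    have hcc : √c * √c = c := Real.mul_self_sqrt hc0.le
    have he1 : |e| ≤ (2 * √c) * M := by
      refine aux_joint r ν q (2 * n) _ I (by positivity) hI ?_
      refine hD.mono fun θ hθ => hθ.mono fun x hx => ?_
      refine (enorm_integral_le_lintegral_enorm _).trans ?_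
      calc _ ≤ ∫⁻ zs, (ENNReal.ofReal (1 / √c) * ENNReal.ofReal (mlmcCorrection3 w n θ x zs ^ 2)
              + ENNReal.ofReal √c) ∂(Measure.pi fun _ : Fin (2 * n) => q x) := by
            refine lintegral_mono fun zs => ?_
            rw [Real.enorm_eq_ofReal_abs, ← ENNReal.ofReal_mul (by positivity),
              ← ENNReal.ofReal_add (by positivity) (by positivity)]
            apply ENNReal.ofReal_le_ofReal
            set d := mlmcCorrection3 w n θ x zs
            rw [one_div, inv_mul_eq_div, div_add' _ _ _ hsq.ne', le_div_iff₀ hsq, ← sq_abs d]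
            nlinarith [sq_nonneg (|d| - √c), abs_nonneg d]
        _ ≤ ENNReal.ofReal (1 / √c) * (ENNReal.ofReal c * I θ x) + ENNReal.ofReal √c * I θ x := by
            rw [lintegral_add_right _ measurable_const, lintegral_const_mul' _ _ ENNReal.ofReal_ne_top]
            refine add_le_add (mul_le_mul' le_rfl hx) ?_
            simp only [lintegral_const, measure_univ]
            exact mul_le_mul' le_rfl (hI1 θ x)
        _ = ENNReal.ofReal (2 * √c) * I θ x := by
            rw [← mul_assoc, ← add_mul, ← ENNReal.ofReal_mul (by positivity),
              ← ENNReal.ofReal_add (by positivity) (by positivity)]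
            congr 2
            rw [show 1 / √c * c = √c by rw [one_div, inv_mul_eq_div, div_eq_iff hsq.ne', hcc]]
            ring
    have he2 : e ^ 2 ≤ 4 * c * M ^ 2 := by
      rw [← sq_abs]
      calc |e| ^ 2 ≤ ((2 * √c) * M) ^ 2 := by gcongr
        _ = 4 * (√c * √c) * M ^ 2 := by ring
        _ = _ := by rw [hcc]
    have hvar : |jointExp3 r ν q (2 * n) (fun θ x zs => (mlmcCorrection3 w n θ x zs - e) ^ 2)|
        ≤ (2 * c + 2 * e ^ 2) * M := by
      refine aux_joint r ν q (2 * n) _ I (by positivity) hI ?_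
      refine hD.mono fun θ hθ => hθ.mono fun x hx => ?_
      refine (enorm_integral_le_lintegral_enorm _).trans ?_
      calc _ ≤ ∫⁻ zs, (ENNReal.ofReal 2 * ENNReal.ofReal (mlmcCorrection3 w n θ x zs ^ 2)
              + ENNReal.ofReal (2 * e ^ 2)) ∂(Measure.pi fun _ : Fin (2 * n) => q x) := by
            refine lintegral_mono fun zs => ?_
            rw [Real.enorm_eq_ofReal_abs, ← ENNReal.ofReal_mul (by positivity),
              ← ENNReal.ofReal_add (by positivity) (by positivity), abs_of_nonneg (sq_nonneg _)]
            apply ENNReal.ofReal_le_ofReal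
            nlinarith [sq_nonneg (mlmcCorrection3 w n θ x zs + e)]
        _ ≤ ENNReal.ofReal 2 * (ENNReal.ofReal c * I θ x) + ENNReal.ofReal (2 * e ^ 2) * I θ x := by
            rw [lintegral_add_right _ measurable_const, lintegral_const_mul' _ _ ENNReal.ofReal_ne_top]
            refine add_le_add (mul_le_mul' le_rfl hx) ?_
            simp only [lintegral_const, measure_univ]
            exact mul_le_mul' le_rfl (hI1 θ x)
        _ = _ := by
            rw [← mul_assoc, ← add_mul, ← ENNReal.ofReal_mul (by positivity),
              ← ENNReal.ofReal_add (by positivity) (by positivity)]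
    refine (le_abs_self _).trans (hvar.trans ?_)
    have hpow : (n : ℝ) ^ (-β) ≤ 4 * (2 : ℝ) ^ (-β * ℓ) := by
      have h1 : (n : ℝ) = (2 : ℝ) ^ ((ℓ : ℝ) - 1) := by
        rw [hn]; push_cast
        rw [← Real.rpow_natCast, Nat.cast_sub hℓ]; simp
      rw [h1, ← Real.rpow_mul (by norm_num),
        show ((ℓ : ℝ) - 1) * -β = β + -β * ℓ by ring, Real.rpow_add (by norm_num)]
      have : (2 : ℝ) ^ β ≤ 4 := by
        calc (2 : ℝ) ^ β ≤ (2 : ℝ) ^ (2 : ℝ) :=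
              Real.rpow_le_rpow_of_exponent_le (by norm_num) hβ2
          _ = 4 := by norm_num
      gcongr
    have hT : 0 ≤ (2 : ℝ) ^ (-β * ℓ) := by positivity
    set T := (2 : ℝ) ^ (-β * ℓ)
    calc (2 * c + 2 * e ^ 2) * M ≤ (2 * c + 2 * (4 * c * M ^ 2)) * M := by gcongr
      _ = c * ((2 + 8 * M ^ 2) * M) := by ring
      _ ≤ (4 * (C₂ * (4 * T))) * ((2 + 8 * M ^ 2) * M) := by rw [hc]; gcongr
      _ = 16 * C₂ * ((2 + 8 * M ^ 2) * M) * T := by ring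
      _ ≤ _ := by
        gcongr
        have : 0 ≤ C₁ * M := by positivity
        linarith
  · intro ℓ
    rw [hα]
    have hb : |jointExp3 r ν q (2 ^ ℓ) (fun θ x zs => Real.log ((∑ k, w θ x (zs k)) / 2 ^ ℓ))|
        ≤ (C₁ * (2 : ℝ) ^ (-(ρ / 2) * ℓ)) * M := by
      refine aux_joint r ν q (2 ^ ℓ) _ I (by positivity) hI ?_
      refine hnorm.mono fun θ hθ => hθ.mono fun x hx => ?_
      have h1 := aux_bias (q x) hx (2 ^ ℓ) (by positivity)
      have h2 := H₁ (2 ^ ℓ) (q x) (w θ x) (hwm θ x) (hw_pos θ x) hx univ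
        ⟨⟨0, by positivity⟩, Finset.mem_univ _⟩
      simp only [Finset.card_univ, Fintype.card_fin, Real.rpow_one, Nat.cast_pow,
        Nat.cast_ofNat] at h1 h2
      refine h1.trans (h2.trans (le_of_eq ?_))
      congr 3
      rw [← Real.rpow_natCast, ← Real.rpow_mul (by norm_num)]
      congr 1; ring
    refine hb.trans ?_
    have hT : 0 ≤ (2 : ℝ) ^ (-(ρ / 2) * ℓ) := by positivity
    calc _ = C₁ * M * (2 : ℝ) ^ (-(ρ / 2) * ℓ) := by ring
      _ ≤ _ := by
        gcongr
        have : 0 ≤ 16 * C₂ * ((2 + 8 * M ^ 2) * M) := by positivity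
        linarith
end
end

section
/- For every real x > 0 and every r with 1 ≤ r ≤ 2, the inequality |log x − x + 1| ≤ |x − 1|^r · max(−log x, 1) holds. -/
theorem aux_small (x : ℝ) (hx : 0 < x) (h1 : x < 1) :
    -Real.log x - (1 - x) ≤ (1 - x) ^ 2 * max (-Real.log x) 1 := by
  have hL0 : Real.log x < 0 := Real.log_neg hx h1
  rcases le_or_gt 1 (-Real.log x) with hL | hL
  · rw [max_eq_left hL]
    have he : 2.7 < Real.exp 1 := by have := Real.exp_one_gt_d9; linarith
    have he' : Real.exp 1 < 2.72 := by have := Real.exp_one_lt_d9; linarith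
    -- x * e ≤ 1
    have hxe : x * Real.exp 1 ≤ 1 := by
      have h : x ≤ Real.exp (-1) := by
        rw [← Real.log_le_iff_le_exp hx]; linarith
      calc x * Real.exp 1 ≤ Real.exp (-1) * Real.exp 1 := by gcongr
        _ = 1 := by rw [← Real.exp_add]; simp
    have hx2 : x ≤ 0.371 := by nlinarith
    have hLx : -Real.log x * x ≤ 0.371 := by
      have h := Real.add_one_le_exp (-Real.log x - 1)
      have h2 : Real.exp (-Real.log x - 1) * (x * Real.exp 1) = 1 := by
        conv_lhs => rw [← Real.exp_log hx, Real.log_exp]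
        rw [← Real.exp_add, ← Real.exp_add]; simp
      have hp : 0 < x * Real.exp 1 := by positivity
      have h3 : -Real.log x * x * Real.exp 1 ≤ 1 := by nlinarith
      nlinarith
    nlinarith
  · rw [max_eq_right hL.le]
    by_cases hu : 1 ≤ (1 - x) + (1 - x) ^ 2
    · linarith
    push Not at hu
    set t := -Real.log x / 2 with ht
    have hsinh : t ≤ Real.sinh t := Real.self_le_sinh_iff.2 (by linarith)
    rw [Real.sinh_eq] at hsinh
    set s := Real.exp (-t) with hs
    have hs0 : 0 < s := Real.exp_pos _
    have hst : Real.exp t * s = 1 := by rw [hs, ← Real.exp_add]; simp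
    have hsx : x = s ^ 2 := by
      rw [hs, pow_two, ← Real.exp_add, ht]
      conv_lhs => rw [← Real.exp_log hx]
      congr 1; ring
    have hs1 : s < 1 := by nlinarith
    have hgold : 0 < s ^ 2 + s - 1 := by
      by_contra hc
      push Not at hc
      rw [hsx] at hu
      have : s ^ 2 - s - 1 < 0 := by nlinarith
      nlinarith [mul_nonneg_of_nonpos_of_nonpos hc this.le]
    have hE : Real.exp t ≤ 1 / s := by rw [le_div_iff₀ hs0]; linarith
    have hE2 : Real.exp t ≤ s + (1 - s ^ 2) + (1 - s ^ 2) ^ 2 := by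
      refine hE.trans ?_
      rw [div_le_iff₀ hs0]
      have h1 : 0 ≤ (1 - s) * (s ^ 2 + s - 1) := by
        apply mul_nonneg <;> linarith
      have h2 : 0 ≤ (1 - s ^ 2) * ((1 - s) * (s ^ 2 + s - 1)) :=
        mul_nonneg (by nlinarith) h1
      nlinarith
    rw [← hsx] at hE2
    linarith

/-- **Elementary logarithmic inequality.**
For every real `x > 0` and every `r` with `1 ≤ r ≤ 2`, we have
`|log x − x + 1| ≤ |x − 1|^r · max (−log x) 1`, where the power is the real power. -/
theorem abs_log_sub_add_one_le_rpow_mul_max (x r : ℝ) (hx : 0 < x)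
    (hr1 : 1 ≤ r) (hr2 : r ≤ 2) :
    |Real.log x - x + 1| ≤ |x - 1| ^ r * max (-Real.log x) 1 := by
  have hlog := Real.log_le_sub_one_of_pos hx
  rw [abs_of_nonpos (by linarith)]
  rcases lt_or_ge x 1 with h1 | h1
  · rw [abs_of_neg (by linarith)]
    have hp : (1 - x) ^ 2 ≤ (-(x - 1)) ^ r := by
      have h := Real.rpow_le_rpow_of_exponent_ge (x := -(x - 1)) (by linarith) (by linarith) hr2
      rw [Real.rpow_two] at h
      linarith [h]
    have hm : 0 ≤ max (-Real.log x) 1 := le_max_of_le_right zero_le_one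
    have := mul_le_mul_of_nonneg_right hp hm
    linarith [aux_small x hx h1]
  · rw [abs_of_nonneg (by linarith)]
    have hl0 : 0 ≤ Real.log x := Real.log_nonneg h1
    have hp0 : 0 ≤ (x - 1) ^ r := Real.rpow_nonneg (by linarith) _
    have key : -(Real.log x - x + 1) ≤ (x - 1) ^ r := by
      rcases le_or_gt (x - 1) 1 with h2 | h2
      · rcases h1.eq_or_lt with h | h
        · subst h; simpa using hp0
        have h3 := Real.rpow_le_rpow_of_exponent_ge (x := x - 1) (by linarith) h2 hr2
        rw [Real.rpow_two] at h3
        have h4 := Real.one_sub_inv_le_log_of_pos hx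
        have h5 : x - 1 - (1 - x⁻¹) ≤ (x - 1) ^ 2 := by
          have h6 : x * x⁻¹ = 1 := mul_inv_cancel₀ hx.ne'
          have h7 : x⁻¹ ≤ 1 := inv_le_one_of_one_le₀ h1
          have h8 : x - 1 - (1 - x⁻¹) = (x - 1) ^ 2 * x⁻¹ := by field_simp
          rw [h8]
          exact mul_le_of_le_one_right (sq_nonneg _) h7
        linarith
      · have h3 := Real.rpow_le_rpow_of_exponent_le (x := x - 1) h2.le hr1
        rw [Real.rpow_one] at h3
        linarith
    have := mul_le_mul_of_nonneg_left (le_max_right (-Real.log x) 1) hp0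
    linarith
end
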